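/- arXiv:2204.03908 — 3 statements merged into one kernel-verified Lean document; each statement's English description precedes it below -/
import Mathlib

section
/- Fix ω > 0 and constants ρ₁ > ρ₂ > 0; set α = 1/(ρ₁+1). Let q = αξ² be a positive constant with 0 < ξ < π/ω, let b : ℝ → ℝ be continuous and ω-periodic, and let c, e : ℝ → (0,∞) be continuous ω-periodic functions. Let G be the explicit Green's function G(t,s) = cos(ξ(t−s−ω/2))/(2ξ sin(ξω/2)) for 0 ≤ s ≤ t ≤ ω, G(t,s) = cos(ξ(t−s+ω/2))/(2ξ sin(ξω/2)) for 0 ≤ t < s ≤ ω, and define G*, G_*, M, σ, δ from G. Assume (H₂): (1−α)(G* + δG_*)δ²ω/σ < 1, and assume there exists r > 0 satisfying (H₁): e_*(σr)^{1−α} + b_* ≥ 0 and r ≤ (G_* c_* ω σ^{1−α−αρ₂}/α)^{1/(α+αρ₂)}. Then the equation x'' + q x = b(t)/x^{ρ₁} + c(t)/x^{ρ₂} + e(t) has at least one positive ω-periodic solution, i.e. a twice continuously differentiable ω-periodic function x : ℝ → (0,∞) satisfying the equation for all t. -/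
open Real Set

/-!
The equation has the form `x'' + k² x = F(t, x)` with `k = √α ξ` and `k ω < π`. Put `y = (σ r) ^ α`.
The first half of (H₁) gives `b / x ^ ρ₁ + e ≥ 0` for `x ≥ y`, so `F(t, x) ≥ c / x ^ ρ₂`
there. Since `Ginf ω ≤ 1 / ξ²` and `σ ≤ cos (ξ ω / 2) ≤ cos (k ω / 2) ^ ρ₂`, the second half gives
`k² y ^ (1 + ρ₂) ≤ cst * cos (k ω / 2) ^ ρ₂`.

Replace `F(t, x)` by the bounded, globally Lipschitz nonlinearity `g(t, x) = F(t, max x y)`.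
* The truncated equation has a periodic solution (`exists_periodic_solution`). In the rotating
  complex coordinate `Z = e^{-ikt} (x - i x' / k)` the equation is `Z' = V(t, Z)` with `V` bounded
  and Lipschitz, and periodicity becomes a fixed point equation for a bounded continuous self-map
  of `ℂ`. It is solvable by Brouwer's theorem in the plane (`exists_fixedPoint_of_bounded`), which
  follows from the lifting property of the covering `exp : ℂ → ℂ \ {0}`.
* The solution satisfies `x ≥ y`, hence solves the original equation. Positivity of the periodic
  Green's function of `x'' + k² x` gives the Harnack inequality `x t ≥ cos (k ω / 2) * x s`
  (`comparison`). If `x t₀ < y` for some `t₀`, then `max x y ≤ y / cos (k ω / 2)` everywhere, so the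
  right-hand side is at least `m = cst * (cos (k ω / 2) / y) ^ ρ₂` and `x ≥ m / k² ≥ y`, a
  contradiction.
-/

/-! ### A planar fixed point theorem -/

/-- Brouwer's theorem in the plane, for bounded maps. If `f` had no fixed point, `z - f z` would have a
continuous logarithm on `ℂ`. On a circle of radius greater than `R`, the quotient `(z - f z) / z` has
a continuous principal logarithm, so `z` itself would have a continuous logarithm on that circle. -/
lemma exists_fixedPoint_of_bounded {f : ℂ → ℂ} (hf : Continuous f) {R : ℝ}
    (hR : ∀ z, ‖f z‖ ≤ R) : ∃ z, f z = z := by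
  by_contra! hne
  have hR0 : 0 ≤ R := (norm_nonneg _).trans (hR 0)
  set P : ℝ := R + 1 with hP
  have hP0 : 0 < P := by positivity
  obtain ⟨L, hL, -⟩ := Complex.isCoveringMapOn_exp.existsUnique_continuousMap_lifts
    (⟨fun z => z - f z, by fun_prop⟩ : C(ℂ, ℂ)) (a₀ := (0 : ℂ)) (e₀ := Complex.log (0 - f 0))
    (Complex.exp_log (sub_ne_zero.mpr (hne 0).symm))
    (fun z => by simpa using sub_ne_zero.mpr (hne z).symm)
  have hLexp : ∀ z, Complex.exp (L z) = z - f z := fun z => congrFun hL.2 z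
  let c : ℝ → ℂ := fun t => P * Complex.exp (t * Complex.I)
  have hc : Continuous c := by fun_prop
  have hc0 : ∀ t, c t ≠ 0 := fun t => by simp [c, hP0.ne']
  have hcn : ∀ t, ‖c t‖ = P := fun t => by
    simp [c, Complex.norm_exp_ofReal_mul_I, abs_of_pos hP0]
  have hslit : ∀ t, 1 - f (c t) / c t ∈ Complex.slitPlane := fun t => by
    rw [sub_eq_add_neg]
    refine Complex.mem_slitPlane_of_norm_lt_one ?_
    rw [norm_neg, norm_div, hcn, div_lt_one hP0]
    linarith [hR (c t)]
  let T : ℝ → ℂ := fun t => L (c t) - Complex.log (1 - f (c t) / c t)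
  have hT : Continuous T := by
    refine (L.continuous.comp hc).sub (Continuous.clog ?_ hslit)
    exact continuous_const.sub ((hf.comp hc).div hc hc0)
  have hTexp : ∀ t, Complex.exp (T t) = c t := fun t => by
    have h1 : 1 - f (c t) / c t ≠ 0 := Complex.slitPlane_ne_zero (hslit t)
    have h2 := hc0 t
    rw [Complex.exp_sub, hLexp, Complex.exp_log h1, div_eq_iff h1]
    field_simp
  have hU : Continuous fun t : ℝ => T 0 + t * Complex.I := by fun_prop
  -- `T` and the affine function on the right both lift `t ↦ P e^{it}` through `exp`.
  have heq : T = fun t : ℝ => T 0 + t * Complex.I := by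
    refine Complex.isCoveringMap_exp.eq_of_comp_eq hT hU ?_ 0 (by simp)
    funext t
    apply Subtype.ext
    simp only [Function.comp]
    rw [hTexp, Complex.exp_add, hTexp]
    simp [c]
  have h2 := congrFun heq (2 * π)
  have hcc : c (2 * π) = c 0 := by simp [c, Complex.exp_two_pi_mul_I]
  have hTT : T (2 * π) = T 0 := by simp only [T, hcc]
  rw [hTT] at h2
  have := congrArg Complex.im h2
  simp at this

/-! ### Periodic solutions for a bounded Lipschitz nonlinearity -/

/-- For a bounded, globally Lipschitz field, Picard–Lindelöf holds on the whole of `[0, ω]` (the radius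
`L * ω` is large enough), and the time-`ω` map is continuous by Grönwall's inequality. -/
lemma exists_flow {V : ℝ → ℂ → ℂ} {K L : NNReal} {ω : ℝ} (hω : 0 < ω)
    (hlip : ∀ t, LipschitzWith K (V t)) (hcont : ∀ z, Continuous fun t => V t z)
    (hL : ∀ t z, ‖V t z‖ ≤ L) :
    ∃ Φ : ℂ → ℝ → ℂ, (∀ z, Φ z 0 = z) ∧
      (∀ z, ∀ t ∈ Icc 0 ω, HasDerivWithinAt (Φ z) (V t (Φ z t)) (Icc 0 ω) t) ∧
      Continuous (fun z => Φ z ω) ∧ ∀ z, ‖Φ z ω - z‖ ≤ L * ω := by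
  have hPL : ∀ z, IsPicardLindelof V (⟨0, by simp [hω.le]⟩ : Icc 0 ω) z
      (L * NNReal.mk ω hω.le) 0 L K := fun z =>
    { lipschitzOnWith := fun t _ => (hlip t).lipschitzOnWith
      continuousOn := fun x _ => (hcont x).continuousOn
      norm_le := fun t _ x _ => hL t x
      mul_max_le := by
        change (L : ℝ) * max (ω - 0) (0 - 0) ≤ L * ω - 0
        simp [hω.le] }
  choose Φ h0 hd using fun z => (hPL z).exists_eq_forall_mem_Icc_hasDerivWithinAt₀
  have h0' : ∀ z, Φ z 0 = z := h0
  have hω' : ω ∈ Icc 0 ω := ⟨hω.le, le_rfl⟩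
  refine ⟨Φ, h0', hd, ?_, fun z => ?_⟩
  · refine (LipschitzWith.of_dist_le_mul (K := NNReal.mk (Real.exp (K * ω)) (by positivity))
      fun z w => ?_).continuous
    have key := dist_le_of_trajectories_ODE (v := V) (K := K) (f := Φ z) (g := Φ w) (a := 0) (b := ω)
      (δ := dist z w) hlip
      (fun t ht => (hd z t ht).continuousWithinAt)
      (fun t ht => (hd z t ⟨ht.1, ht.2.le⟩).mono_of_mem_nhdsWithin
        (Icc_mem_nhdsGE_of_mem ht))
      (fun t ht => (hd w t ht).continuousWithinAt)
      (fun t ht => (hd w t ⟨ht.1, ht.2.le⟩).mono_of_mem_nhdsWithin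
        (Icc_mem_nhdsGE_of_mem ht))
      (by rw [h0', h0']) ω hω'
    rw [sub_zero] at key
    rw [mul_comm]; exact key
  · have := (convex_Icc 0 ω).norm_image_sub_le_of_norm_hasDerivWithin_le (hd z)
      (fun t _ => hL t _) (left_mem_Icc.2 hω.le) hω'
    rw [h0', sub_zero, Real.norm_of_nonneg hω.le] at this
    exact this
/-- Periodic solutions of `x'' + k² x = g(t, x)` in the nonresonant range `k ω < 2 π`, with `v = x'`. -/
lemma exists_periodic_solution {g : ℝ → ℝ → ℝ} {k ω N K : ℝ} (hk : 0 < k) (hω : 0 < ω)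
    (hkω : k * ω < 2 * π) (hg : Continuous (Function.uncurry g))
    (hper : ∀ t u, g (t + ω) u = g t u) (hN : ∀ t u, |g t u| ≤ N) (hK0 : 0 ≤ K)
    (hK : ∀ t u v, |g t u - g t v| ≤ K * |u - v|) :
    ∃ x v : ℝ → ℝ, (∀ t, HasDerivAt x (v t) t) ∧
      (∀ t, HasDerivAt v (g t (x t) - k ^ 2 * x t) t) ∧ Function.Periodic x ω := by
  have hN0 : 0 ≤ N := (abs_nonneg _).trans (hN 0 0)
  let E : ℝ → ℂ := fun t => Complex.exp ((k * t : ℝ) * Complex.I)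
  have hE0 : ∀ t, E t ≠ 0 := fun t => Complex.exp_ne_zero _
  have hEn : ∀ t, ‖E t‖ = 1 := fun t => Complex.norm_exp_ofReal_mul_I _
  have hEc : Continuous E := by fun_prop
  have hEd : ∀ t, HasDerivAt E (Complex.I * k * E t) t := fun t => by
    have h1 : HasDerivAt (fun t : ℝ => ((k * t : ℝ) : ℂ) * Complex.I) ((k : ℂ) * Complex.I) t := by
      have h0 : HasDerivAt (fun t : ℝ => k * t) k t := by
        simpa using (hasDerivAt_id t).const_mul k
      exact h0.ofReal_comp.mul_const _
    exact h1.cexp.congr_deriv (by simp only [E]; ring)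
  let V : ℝ → ℂ → ℂ := fun t z => -(Complex.I / k) * (E t)⁻¹ * (g t (E t * z).re : ℝ)
  have hcoef : ∀ t, ‖-(Complex.I / k) * (E t)⁻¹‖ = 1 / k := fun t => by
    rw [norm_mul, norm_neg, norm_div, norm_inv, hEn]
    simp [abs_of_pos hk]
  obtain ⟨Φ, h0, hd, hΦc, hΦb⟩ := exists_flow (V := V) (K := NNReal.mk (K / k) (by positivity))
    (L := NNReal.mk (N / k) (by positivity)) hω
    (fun t => LipschitzWith.of_dist_le_mul fun z w => by
      rw [dist_eq_norm, dist_eq_norm]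
      simp only [V]
      rw [← mul_sub, norm_mul, hcoef, ← Complex.ofReal_sub, Complex.norm_real, Real.norm_eq_abs,
        NNReal.coe_mk]
      have h1 := hK t (E t * z).re (E t * w).re
      have h2 : |(E t * z).re - (E t * w).re| ≤ ‖z - w‖ := by
        rw [← Complex.sub_re, ← mul_sub]
        refine (Complex.abs_re_le_norm _).trans ?_
        rw [norm_mul, hEn, one_mul]
      calc 1 / k * |g t (E t * z).re - g t (E t * w).re|
          ≤ 1 / k * (K * ‖z - w‖) := by
            gcongr; exact h1.trans (mul_le_mul_of_nonneg_left h2 hK0)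
        _ = K / k * ‖z - w‖ := by ring)
    (fun z => by
      have h1 : Continuous fun t => g t (E t * z).re :=
        hg.comp (continuous_id.prodMk (Complex.continuous_re.comp (hEc.mul continuous_const)))
      exact (continuous_const.mul (hEc.inv₀ hE0)).mul (Complex.continuous_ofReal.comp h1))
    (fun t z => by
      simp only [V]
      rw [norm_mul, hcoef, Complex.norm_real, Real.norm_eq_abs, NNReal.coe_mk]
      calc 1 / k * |g t (E t * z).re| ≤ 1 / k * N := by gcongr; exact hN _ _
        _ = N / k := by ring)
  have hE1 : 1 - E ω ≠ 0 := fun h => by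
    have h1 : (E ω).re = 1 := by rw [← sub_eq_zero.1 h]; simp
    have h2 : cos (k * ω) = 1 := by
      rw [← h1]; simp only [E]; rw [Complex.exp_ofReal_mul_I_re]
    obtain h3 := (cos_eq_one_iff_of_lt_of_lt (by nlinarith [mul_pos hk hω, pi_pos]) hkω).1 h2
    exact (mul_pos hk hω).ne' h3
  -- `E ω * Φ z ω = z` rewritten as a fixed point equation whose right-hand side is bounded.
  obtain ⟨z, hz⟩ := exists_fixedPoint_of_bounded
    (f := fun z => (1 - E ω)⁻¹ * (E ω * (Φ z ω - z))) (R := ‖(1 - E ω)⁻¹‖ * (N / k * ω))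
    (by fun_prop) (fun z => by
      rw [norm_mul, norm_mul, hEn, one_mul]
      gcongr
      exact hΦb z)
  have hz' : E ω * Φ z ω = z := by
    have := congrArg (fun w => (1 - E ω) * w) hz
    simp only [mul_inv_cancel_left₀ hE1] at this
    linear_combination this
  let ζ : ℝ → ℂ := fun t => E t * Φ z t
  have hζ0 : ζ 0 = ζ (0 + ω) := by
    simp only [ζ, zero_add, hz', h0]; simp [E]
  have hζd : ∀ t ∈ Icc 0 ω, HasDerivWithinAt ζ
      (Complex.I * k * ζ t - Complex.I / k * (g t (ζ t).re : ℝ)) (Icc 0 ω) t := fun t ht => by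
    refine ((hEd t).hasDerivWithinAt.mul (hd z t ht)).congr_deriv ?_
    simp only [V, ζ]
    field_simp [hE0 t]
    ring
  have hζc : ContinuousOn ζ (Icc 0 (0 + ω)) := by
    rw [zero_add]; exact fun t ht => (hζd t ht).continuousWithinAt
  have : Fact (0 < ω) := ⟨hω⟩
  -- `P` is the `ω`-periodic extension of `ζ`, the complex form `x - i x' / k` of the solution.
  let P : ℝ → ℂ := fun t => AddCircle.liftIco ω 0 ζ (t : AddCircle ω)
  have hPc : Continuous P :=
    (AddCircle.liftIco_continuous hζ0 hζc).comp (AddCircle.continuous_mk' ω)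
  have hPper : Function.Periodic P ω := fun t => by simp only [P, AddCircle.coe_add_period]
  have hPζ : ∀ t ∈ Icc 0 ω, P t = ζ t := fun t ht => by
    have hI : ∀ s ∈ Ico 0 ω, P s = ζ s := fun s hs =>
      AddCircle.liftIco_coe_apply (by rwa [zero_add])
    rcases ht.2.eq_or_lt with h | h
    · rw [h, ← zero_add ω, hPper, hI 0 ⟨le_rfl, hω⟩, hζ0]
    · exact hI t ⟨ht.1, h⟩
  let h : ℝ → ℂ := fun t => Complex.I * k * P t - Complex.I / k * (g t (P t).re : ℝ)
  have hgc : Continuous fun t => g t (P t).re :=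
    hg.comp (continuous_id.prodMk (Complex.continuous_re.comp hPc))
  have hhc : Continuous h :=
    (continuous_const.mul hPc).sub (continuous_const.mul (Complex.continuous_ofReal.comp hgc))
  have hhper : Function.Periodic h ω := fun t => by simp only [h, hPper t, hper]
  have hint : ∀ t ∈ Icc 0 ω, ∫ s in (0 : ℝ)..t, h s = ζ t - ζ 0 := fun t ht => by
    refine intervalIntegral.integral_eq_sub_of_hasDerivAt_of_le ht.1
      (fun s hs => ((hζd s ⟨hs.1, hs.2.trans ht.2⟩).continuousWithinAt).mono
        (Icc_subset_Icc_right ht.2)) (fun s hs => ?_) (hhc.intervalIntegrable _ _)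
    have hs' : s ∈ Icc 0 ω := ⟨hs.1.le, hs.2.le.trans ht.2⟩
    have := (hζd s hs').hasDerivAt (Icc_mem_nhds hs.1 (hs.2.trans_le ht.2))
    rwa [← hPζ s hs'] at this
  -- The periodic extension is recovered as a primitive of a continuous function, which makes it
  -- differentiable also at the multiples of `ω`.
  let Q : ℝ → ℂ := fun t => ζ 0 + ∫ s in (0 : ℝ)..t, h s
  have hQper : Function.Periodic Q ω := fun t => by
    simp only [Q]
    rw [← intervalIntegral.integral_add_adjacent_intervals (hhc.intervalIntegrable 0 t)
      (hhc.intervalIntegrable t (t + ω)), hhper.intervalIntegral_add_eq t 0, zero_add,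
      hint ω ⟨hω.le, le_rfl⟩, hζ0, zero_add, sub_self, add_zero]
  have hPQ : P = Q := funext fun t => by
    obtain ⟨s, hs, hst⟩ := (hPper.sub hQper).exists_mem_Ico₀ hω t
    have hs' : s ∈ Icc 0 ω := ⟨hs.1, hs.2.le⟩
    rw [← sub_eq_zero]
    refine hst.trans ?_
    simp only [Pi.sub_apply, Q, hPζ s hs', hint s hs']
    ring
  have hPd : ∀ t, HasDerivAt P (h t) t := fun t => by
    rw [hPQ]
    exact (intervalIntegral.integral_hasDerivAt_right (hhc.intervalIntegrable _ _)
      hhc.aestronglyMeasurable.stronglyMeasurableAtFilter hhc.continuousAt).const_add _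
  have hre : ∀ t, (h t).re = -k * (P t).im := fun t => by
    simp [h, Complex.div_re, Complex.div_im]
  have him : ∀ t, (h t).im = k * (P t).re - g t (P t).re / k := fun t => by
    have : h t = ((-k * (P t).im : ℝ) : ℂ)
        + ((k * (P t).re - g t (P t).re / k : ℝ) : ℂ) * Complex.I := by
      have h1 := (Complex.re_add_im (P t)).symm
      simp only [h]
      push_cast
      linear_combination (Complex.I * k) * h1 + (k * ((P t).im : ℂ)) * Complex.I_sq
    rw [this]; simp
  refine ⟨fun t => (P t).re, fun t => -k * (P t).im, fun t => ?_, fun t => ?_,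
    fun t => by simp only [hPper t]⟩
  · have := Complex.reCLM.hasFDerivAt.comp_hasDerivAt t (hPd t)
    exact this.congr_deriv (hre t)
  · have := (Complex.imCLM.hasFDerivAt.comp_hasDerivAt t (hPd t)).const_mul (-k)
    refine this.congr_deriv ?_
    simp only [Complex.imCLM_apply, him]
    field_simp
    ring

/-! ### Auxiliary inequalities -/

/-- Equivalent to `l² log (cos θ) ≤ log (cos (l θ))`, which holds because `s ↦ log (cos √s)` is concave
and vanishes at `0`. -/
lemma cos_le_cos_mul_rpow {l θ : ℝ} (hl : 0 < l) (hl1 : l ≤ 1) (hθ : 0 ≤ θ) (hθ2 : θ < π / 2) :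
    cos θ ≤ cos (l * θ) ^ (1 / l ^ 2) := by
  have hcos : ∀ s ∈ Icc 0 θ, 0 < cos s := fun s hs =>
    cos_pos_of_mem_Ioo ⟨by linarith [hs.1, pi_pos], by linarith [hs.2]⟩
  have hls : ∀ s ∈ Icc 0 θ, l * s ∈ Icc 0 θ := fun s hs =>
    ⟨mul_nonneg hl.le hs.1, (mul_le_of_le_one_left hs.1 hl1).trans hs.2⟩
  have hsin : ∀ s ∈ Icc 0 θ, 0 ≤ sin s := fun s hs =>
    sin_nonneg_of_nonneg_of_le_pi hs.1 (by linarith [hs.2, pi_pos])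
  -- This is `tan (l s) ≤ l tan s`, cleared of denominators.
  have hp : ∀ s ∈ Icc 0 θ, sin (l * s) * cos s ≤ l * sin s * cos (l * s) := by
    have hd : ∀ s, HasDerivAt (fun s => l * sin s * cos (l * s) - sin (l * s) * cos s)
        ((1 - l ^ 2) * (sin s * sin (l * s))) s := fun s => by
      have h1 : HasDerivAt (fun s : ℝ => l * s) l s := by
        simpa using (hasDerivAt_id s).const_mul l
      refine ((((hasDerivAt_sin s).const_mul l).mul h1.cos).sub
        (h1.sin.mul (hasDerivAt_cos s))).congr_deriv ?_
      ring
    have hm : MonotoneOn (fun s => l * sin s * cos (l * s) - sin (l * s) * cos s) (Icc 0 θ) := by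
      refine monotoneOn_of_deriv_nonneg (convex_Icc 0 θ)
        (fun s _ => (hd s).continuousAt.continuousWithinAt)
        (fun s _ => (hd s).differentiableAt.differentiableWithinAt) fun s hs => ?_
      have hs' := interior_subset hs
      rw [(hd s).deriv]
      exact mul_nonneg (by nlinarith) (mul_nonneg (hsin s hs') (hsin _ (hls s hs')))
    intro s hs
    have := hm ⟨le_rfl, hθ⟩ hs hs.1
    simp at this
    linarith
  have hd : ∀ s ∈ Icc 0 θ, HasDerivAt (fun s => log (cos (l * s)) - l ^ 2 * log (cos s))
      (-sin (l * s) * l / cos (l * s) - l ^ 2 * (-sin s / cos s)) s := fun s hs => by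
    have h1 : HasDerivAt (fun s : ℝ => l * s) l s := by
      simpa using (hasDerivAt_id s).const_mul l
    exact (h1.cos.log (hcos _ (hls s hs)).ne').sub
      (((hasDerivAt_cos s).log (hcos s hs).ne').const_mul _)
  have hm : MonotoneOn (fun s => log (cos (l * s)) - l ^ 2 * log (cos s)) (Icc 0 θ) := by
    refine monotoneOn_of_deriv_nonneg (convex_Icc 0 θ)
      (fun s hs => (hd s hs).continuousAt.continuousWithinAt)
      (fun s hs => (hd s (interior_subset hs)).differentiableAt.differentiableWithinAt)
      fun s hs => ?_
    have hs' := interior_subset hs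
    rw [(hd s hs').deriv]
    have h1 := hcos s hs'
    have h2 := hcos _ (hls s hs')
    have : -sin (l * s) * l / cos (l * s) - l ^ 2 * (-sin s / cos s)
      = l * (l * sin s * cos (l * s) - sin (l * s) * cos s) / (cos s * cos (l * s)) := by
      field_simp
      ring
    rw [this]
    exact div_nonneg (mul_nonneg hl.le (sub_nonneg.2 (hp s hs'))) (mul_pos h1 h2).le
  have h := hm ⟨le_rfl, hθ⟩ ⟨hθ, le_rfl⟩ hθ
  simp at h
  have hc1 := hcos θ ⟨hθ, le_rfl⟩
  rw [Real.rpow_def_of_pos (hcos _ (hls θ ⟨hθ, le_rfl⟩)), ← Real.log_le_iff_le_exp hc1,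
    mul_one_div, le_div_iff₀ (by positivity)]
  linarith

lemma exists_lipschitz_one_div_max_rpow {ρ y : ℝ} (hρ : 0 < ρ) (hy : 0 < y) :
    ∃ K, 0 ≤ K ∧ ∀ u v : ℝ, |1 / max u y ^ ρ - 1 / max v y ^ ρ| ≤ K * |u - v| := by
  refine ⟨ρ * y ^ (-ρ - 1), by positivity, fun u v => ?_⟩
  have h := (convex_Ici y).norm_image_sub_le_of_norm_hasDerivWithin_le
    (f := fun x : ℝ => x ^ (-ρ)) (f' := fun x => -ρ * x ^ (-ρ - 1)) (C := ρ * y ^ (-ρ - 1))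
    (fun x hx => (Real.hasDerivAt_rpow_const (Or.inl (hy.trans_le hx).ne')).hasDerivWithinAt)
    (fun x hx => ?_) (le_max_right v y : max v y ∈ Ici y) (le_max_right u y : max u y ∈ Ici y)
  · simp only [one_div]
    rw [← Real.rpow_neg (by positivity), ← Real.rpow_neg (by positivity)]
    refine h.trans ?_
    gcongr
    exact abs_max_sub_max_le_abs u v y
  · have hx0 : 0 < x := hy.trans_le hx
    rw [norm_mul, norm_neg, Real.norm_of_nonneg hρ.le, Real.norm_of_nonneg (by positivity)]
    gcongr ρ * ?_
    exact Real.rpow_le_rpow_of_nonpos hy hx (by linarith)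

/-! ### Comparison principle -/

/-- Maximum principle and Harnack inequality for periodic solutions of `x'' + k² x = f` with `f ≥ 0`.
Both come from the representation `2 k sin (k ω / 2) x(t) = ∫ f(s) cos (k (s - t - ω / 2)) ds` over one
period, whose kernel lies between `cos (k ω / 2) > 0` and `1`. -/
lemma comparison {x v f : ℝ → ℝ} {k ω : ℝ} (hk : 0 < k) (hω : 0 < ω) (hkω : k * ω < π)
    (hx : ∀ t, HasDerivAt x (v t) t) (hv : ∀ t, HasDerivAt v (f t - k ^ 2 * x t) t)
    (hper : Function.Periodic x ω) (hf : Continuous f) (hf0 : ∀ t, 0 ≤ f t) :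
    (∀ t, 0 ≤ x t) ∧ ∀ s t, cos (k * ω / 2) * x s ≤ x t := by
  have hxv : deriv x = v := funext fun t => (hx t).deriv
  have hvper : Function.Periodic v ω := fun t => by
    have h1 := (hx (t + ω)).comp_add_const t ω
    have h2 : (fun s => x (s + ω)) = x := funext hper
    rw [h2] at h1
    exact h1.unique (hx t)
  have hxc : Continuous x := continuous_iff_continuousAt.2 fun t => (hx t).continuousAt
  have hfper : Function.Periodic f ω := fun t => by
    have h1 := (hv (t + ω)).comp_add_const t ω
    have h2 : (fun s => v (s + ω)) = v := funext hvper
    rw [h2] at h1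
    have := h1.unique (hv t)
    rw [hper t] at this
    linarith
  have hS : 0 < sin (k * ω / 2) := sin_pos_of_pos_of_lt_pi (by positivity) (by nlinarith [pi_pos])
  have hC : 0 < cos (k * ω / 2) :=
    cos_pos_of_mem_Ioo ⟨by nlinarith [pi_pos, mul_pos hk hω], by linarith⟩
  set I := ∫ s in (0 : ℝ)..ω, f s with hI
  have hIt : ∀ t, ∫ s in t..(t + ω), f s = I := fun t => by
    rw [hI, hfper.intervalIntegral_add_eq t 0, zero_add]
  have hrep : ∀ t, ∫ s in t..(t + ω), f s * cos (k * (s - t - ω / 2)) =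
      2 * k * sin (k * ω / 2) * x t := fun t => by
    have hd : ∀ s, HasDerivAt (fun s => v s * cos (k * (s - t - ω / 2))
        + k * x s * sin (k * (s - t - ω / 2))) (f s * cos (k * (s - t - ω / 2))) s := fun s => by
      have h1 : HasDerivAt (fun s => k * (s - t - ω / 2)) k s := by
        simpa using (((hasDerivAt_id s).sub_const t).sub_const (ω / 2)).const_mul k
      refine (((hv s).mul h1.cos).add (((hx s).const_mul k).mul h1.sin)).congr_deriv ?_
      ring
    rw [intervalIntegral.integral_eq_sub_of_hasDerivAt (fun s _ => hd s)
      (Continuous.intervalIntegrable (by fun_prop) _ _), hper t, hvper t]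
    have e1 : k * (t + ω - t - ω / 2) = k * ω / 2 := by ring
    have e2 : k * (t - t - ω / 2) = -(k * ω / 2) := by ring
    rw [e1, e2, cos_neg, sin_neg]
    ring
  have hup : ∀ t, 2 * k * sin (k * ω / 2) * x t ≤ I := fun t => by
    rw [← hrep t, ← hIt t]
    refine intervalIntegral.integral_mono_on (by linarith)
      (Continuous.intervalIntegrable (by fun_prop) _ _) (hf.intervalIntegrable _ _) fun s _ => ?_
    exact mul_le_of_le_one_right (hf0 s) (cos_le_one _)
  have hlo : ∀ t, cos (k * ω / 2) * I ≤ 2 * k * sin (k * ω / 2) * x t := fun t => by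
    rw [← hrep t, ← hIt t, mul_comm, ← intervalIntegral.integral_mul_const]
    refine intervalIntegral.integral_mono_on (by linarith)
      (Continuous.intervalIntegrable (by fun_prop) _ _)
      (Continuous.intervalIntegrable (by fun_prop) _ _) fun s hs => ?_
    refine mul_le_mul_of_nonneg_left ?_ (hf0 s)
    rw [← cos_abs (k * (s - t - ω / 2))]
    refine cos_le_cos_of_nonneg_of_le_pi (abs_nonneg _) (by nlinarith [pi_pos]) ?_
    rw [abs_mul, abs_of_pos hk, mul_div_assoc]
    exact mul_le_mul_of_nonneg_left (abs_le.2 ⟨by linarith [hs.1], by linarith [hs.2]⟩) hk.le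
  have hI0 : 0 ≤ I := intervalIntegral.integral_nonneg hω.le fun s _ => hf0 s
  have hpos : 0 < 2 * k * sin (k * ω / 2) := by positivity
  refine ⟨fun t => ?_, fun s t => ?_⟩
  · exact nonneg_of_mul_nonneg_right ((mul_nonneg hC.le hI0).trans (hlo t)) hpos
  · have h1 := mul_le_mul_of_nonneg_left (hup s) hC.le
    have h2 := hlo t
    refine le_of_mul_le_mul_left ?_ hpos
    linarith
lemma bound_of_periodic {f : ℝ → ℝ} {ω : ℝ} (hω : 0 < ω) (hf : Continuous f)
    (hper : Function.Periodic f ω) : ∃ B, 0 ≤ B ∧ ∀ t, |f t| ≤ B := by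
  obtain ⟨B, hB⟩ := (hper.isBounded_of_continuous hω.ne' hf).exists_norm_le
  exact ⟨B, (norm_nonneg _).trans (hB (f 0) ⟨0, rfl⟩), fun t => hB (f t) ⟨t, rfl⟩⟩

lemma least_le_of_periodic {f : ℝ → ℝ} {ω m : ℝ} (hω : 0 < ω)
    (hper : Function.Periodic f ω) (hm : IsLeast (f '' Icc 0 ω) m) (t : ℝ) : m ≤ f t := by
  obtain ⟨s, hs, hst⟩ := hper.exists_mem_Ico₀ hω t
  rw [hst]
  exact hm.2 ⟨s, ⟨hs.1, hs.2.le⟩, rfl⟩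

/-! ### Existence for the singular equation -/

/-- Existence when the constant `y` is such that the right-hand side dominates `c / x ^ ρ₂` for
`x ≥ y` (`hbe`) and is large enough near `y` (`hyc`). -/
lemma exists_solution_of_lower {ω ρ₁ ρ₂ k y cst : ℝ} (hω : 0 < ω) (hρ₁ : 0 < ρ₁) (hρ₂ : 0 < ρ₂)
    (hk : 0 < k) (hkω : k * ω < π) {b c e : ℝ → ℝ}
    (hb : Continuous b) (hbper : Function.Periodic b ω)
    (hc : Continuous c) (hcper : Function.Periodic c ω)
    (he : Continuous e) (heper : Function.Periodic e ω) (hepos : ∀ t, 0 < e t)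
    (hcst0 : 0 < cst) (hcst : ∀ t, cst ≤ c t) (hy : 0 < y)
    (hbe : ∀ t, 0 ≤ e t * y ^ ρ₁ + b t)
    (hyc : k ^ 2 * y ^ (1 + ρ₂) ≤ cst * cos (k * ω / 2) ^ ρ₂) :
    ∃ x : ℝ → ℝ, ContDiff ℝ 2 x ∧ Function.Periodic x ω ∧ (∀ t, 0 < x t) ∧
      ∀ t, deriv (deriv x) t + k ^ 2 * x t = b t / x t ^ ρ₁ + c t / x t ^ ρ₂ + e t := by
  obtain ⟨B, hB0, hB⟩ := bound_of_periodic hω hb hbper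
  obtain ⟨C, hC0, hC⟩ := bound_of_periodic hω hc hcper
  obtain ⟨D, hD0, hD⟩ := bound_of_periodic hω he heper
  obtain ⟨K₁, hK₁0, hK₁⟩ := exists_lipschitz_one_div_max_rpow hρ₁ hy
  obtain ⟨K₂, hK₂0, hK₂⟩ := exists_lipschitz_one_div_max_rpow hρ₂ hy
  let g : ℝ → ℝ → ℝ := fun t u => b t / max u y ^ ρ₁ + c t / max u y ^ ρ₂ + e t
  have hmax : ∀ u, 0 < max u y := fun u => hy.trans_le (le_max_right _ _)
  have hgc : Continuous (Function.uncurry g) := by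
    have hm : Continuous fun p : ℝ × ℝ => max p.2 y := by fun_prop
    have hr : ∀ ρ : ℝ, Continuous fun p : ℝ × ℝ => max p.2 y ^ ρ := fun ρ =>
      hm.rpow_const fun p => Or.inl (hmax p.2).ne'
    have hr0 : ∀ (ρ : ℝ) (p : ℝ × ℝ), max p.2 y ^ ρ ≠ 0 := fun ρ p =>
      (rpow_pos_of_pos (hmax p.2) ρ).ne'
    exact (((hb.comp continuous_fst).div (hr ρ₁) (hr0 ρ₁)).add
      ((hc.comp continuous_fst).div (hr ρ₂) (hr0 ρ₂))).add (he.comp continuous_fst)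
  have hquot : ∀ (a A ρ u : ℝ), 0 < ρ → |a| ≤ A → |a / max u y ^ ρ| ≤ A / y ^ ρ :=
    fun a A ρ u hρ ha => by
      rw [abs_div, abs_of_pos (rpow_pos_of_pos (hmax u) ρ)]
      exact div_le_div₀ ((abs_nonneg _).trans ha) ha (rpow_pos_of_pos hy ρ)
        (rpow_le_rpow hy.le (le_max_right _ _) hρ.le)
  obtain ⟨x, v, hx, hv, hper⟩ := exists_periodic_solution (g := g) (k := k) (ω := ω)
    (N := B / y ^ ρ₁ + C / y ^ ρ₂ + D) (K := B * K₁ + C * K₂) hk hω (by linarith [pi_pos]) hgc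
    (fun t u => by simp only [g, hbper t, hcper t, heper t])
    (fun t u => (abs_add_three _ _ _).trans (add_le_add_three (hquot _ _ _ _ hρ₁ (hB t))
      (hquot _ _ _ _ hρ₂ (hC t)) (hD t)))
    (by positivity)
    (fun t u w => by
      have : g t u - g t w = b t * (1 / max u y ^ ρ₁ - 1 / max w y ^ ρ₁)
          + c t * (1 / max u y ^ ρ₂ - 1 / max w y ^ ρ₂) := by simp only [g]; ring
      rw [this]
      refine (abs_add_le _ _).trans ?_
      rw [abs_mul, abs_mul, add_mul, mul_assoc, mul_assoc]
      exact add_le_add (mul_le_mul (hB t) (hK₁ u w) (abs_nonneg _) hB0)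
        (mul_le_mul (hC t) (hK₂ u w) (abs_nonneg _) hC0))
  have hxc : Continuous x := continuous_iff_continuousAt.2 fun t => (hx t).continuousAt
  have hfc : Continuous fun t => g t (x t) := hgc.comp (continuous_id.prodMk hxc)
  have hglow : ∀ t u, cst / max u y ^ ρ₂ ≤ g t u := fun t u => by
    have hp1 := rpow_pos_of_pos (hmax u) ρ₁
    have hp2 := rpow_pos_of_pos (hmax u) ρ₂
    have h1 : 0 ≤ b t / max u y ^ ρ₁ + e t := by
      have : 0 ≤ b t + e t * max u y ^ ρ₁ := by
        have h2 : y ^ ρ₁ ≤ max u y ^ ρ₁ := rpow_le_rpow hy.le (le_max_right _ _) hρ₁.le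
        nlinarith [hbe t, mul_le_mul_of_nonneg_left h2 (hepos t).le]
      rw [div_add' _ _ _ hp1.ne']
      exact div_nonneg this hp1.le
    have h2 : cst / max u y ^ ρ₂ ≤ c t / max u y ^ ρ₂ := by gcongr; exact hcst t
    simp only [g]; linarith
  have hcos : 0 < cos (k * ω / 2) :=
    cos_pos_of_mem_Ioo ⟨by nlinarith [pi_pos, mul_pos hk hω], by linarith⟩
  have hyx : ∀ t, y ≤ x t := by
    by_contra! hcon
    obtain ⟨t₀, ht₀⟩ := hcon
    have hcomp := comparison hk hω hkω hx hv hper hfc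
      fun t => (div_nonneg hcst0.le (rpow_nonneg (hmax _).le _)).trans (hglow t (x t))
    -- By Harnack, `x s ≤ x t₀ / cos (k ω / 2)` with `x t₀ < y`.
    have hbd : ∀ s, max (x s) y ≤ y / cos (k * ω / 2) := fun s => by
      rw [le_div_iff₀ hcos]
      rcases max_choice (x s) y with h | h <;> rw [h]
      · linarith [hcomp.2 s t₀]
      · exact mul_le_of_le_one_right hy.le (cos_le_one _)
    set m : ℝ := cst / (y / cos (k * ω / 2)) ^ ρ₂ with hm
    have hgm : ∀ s, m ≤ g s (x s) := fun s => by
      refine le_trans ?_ (hglow s (x s))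
      exact div_le_div_of_nonneg_left hcst0.le (rpow_pos_of_pos (hmax _) _)
        (rpow_le_rpow (hmax _).le (hbd s) hρ₂.le)
    -- Apply the maximum principle to `x - m / k²`, which has right-hand side `g - m ≥ 0`.
    have hlow := (comparison (x := fun t => x t - m / k ^ 2) (v := v)
      (f := fun t => g t (x t) - m) hk hω hkω (fun t => (hx t).sub_const _)
      (fun t => (hv t).congr_deriv (by field_simp; ring)) (fun t => by simp only [hper t])
      (hfc.sub continuous_const) fun t => sub_nonneg.2 (hgm t)).1 t₀
    have : y ≤ m / k ^ 2 := by
      rw [le_div_iff₀ (by positivity), hm, div_rpow hy.le hcos.le, div_div_eq_mul_div,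
        le_div_iff₀ (by positivity)]
      rw [rpow_add hy, rpow_one] at hyc
      linarith
    linarith
  have hxd : deriv x = v := funext fun t => (hx t).deriv
  have hvd : deriv v = fun t => g t (x t) - k ^ 2 * x t := funext fun t => (hv t).deriv
  refine ⟨x, ?_, hper, fun t => hy.trans_le (hyx t), fun t => ?_⟩
  · have h1 : ContDiff ℝ 1 v := contDiff_one_iff_deriv.2
      ⟨fun t => (hv t).differentiableAt, by rw [hvd]; fun_prop⟩
    rw [show (2 : WithTop ℕ∞) = 1 + 1 by norm_num, contDiff_succ_iff_deriv]
    exact ⟨fun t => (hx t).differentiableAt, by simp, by rwa [hxd]⟩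
  · rw [hxd, hvd]
    simp only [g, max_eq_left (hyx t)]
    ring

theorem corollary_rho1_gt_rho2
    (ω ρ₁ ρ₂ α ξ : ℝ) (hω : 0 < ω) (hρ : ρ₂ < ρ₁) (hρ₂ : 0 < ρ₂)
    (hα : α = 1 / (ρ₁ + 1))
    (hξ : 0 < ξ) (hξπ : ξ < Real.pi / ω)
    (b c e : ℝ → ℝ)
    (hb : Continuous b) (hbper : Function.Periodic b ω)
    (hc : Continuous c) (hcper : Function.Periodic c ω) (hcpos : ∀ t, 0 < c t)
    (he : Continuous e) (heper : Function.Periodic e ω) (hepos : ∀ t, 0 < e t)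
    (G : ℝ → ℝ → ℝ)
    (hGdef : ∀ t ∈ Set.Icc 0 ω, ∀ s ∈ Set.Icc 0 ω,
      G t s = if s ≤ t then Real.cos (ξ * (t - s - ω / 2)) / (2 * ξ * Real.sin (ξ * ω / 2))
              else Real.cos (ξ * (t - s + ω / 2)) / (2 * ξ * Real.sin (ξ * ω / 2)))
    (Gsup Ginf M σ δ bst cst est : ℝ)
    (hGsup : IsGreatest {x | ∃ t ∈ Set.Icc 0 ω, ∃ s ∈ Set.Icc 0 ω, G t s = x} Gsup)
    (hGinf : IsLeast {x | ∃ t ∈ Set.Icc 0 ω, ∃ s ∈ Set.Icc 0 ω, G t s = x} Ginf)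
    (hM : IsGreatest {x | ∃ t ∈ Set.Icc 0 ω, ∃ s ∈ Set.Icc 0 ω,
      |deriv (fun τ => G τ s) t| = x} M)
    (hσ : σ = Ginf / (Gsup + M)) (hδ : δ = M / Ginf)
    (hbst : IsLeast (b '' Set.Icc 0 ω) bst)
    (hcst : IsLeast (c '' Set.Icc 0 ω) cst)
    (hest : IsLeast (e '' Set.Icc 0 ω) est)
    (hH2 : (1 - α) * (Gsup + δ * Ginf) * δ ^ 2 * ω / σ < 1)
    (r : ℝ) (hr : 0 < r)
    (hH1a : 0 ≤ est * (σ * r) ^ (1 - α) + bst)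
    (hH1b : r ≤ (Ginf * cst * ω * σ ^ (1 - α - α * ρ₂) / α) ^ (1 / (α + α * ρ₂))) :
    ∃ x : ℝ → ℝ,
      ContDiff ℝ 2 x ∧ Function.Periodic x ω ∧ (∀ t, 0 < x t) ∧
      ∀ t, deriv (deriv x) t + (α * ξ ^ 2) * x t =
        b t / x t ^ ρ₁ + c t / x t ^ ρ₂ + e t := by
  have hρ₁ : 0 < ρ₁ := hρ₂.trans hρ
  have hα0 : 0 < α := by rw [hα]; positivity
  have hαρ : α * (ρ₁ + 1) = 1 := by rw [hα]; field_simp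
  have hα1 : α < 1 := by nlinarith
  have hξω : ξ * ω < π := (lt_div_iff₀ hω).1 hξπ
  have hξω0 : 0 < ξ * ω := mul_pos hξ hω
  have hS : 0 < sin (ξ * ω / 2) := sin_pos_of_pos_of_lt_pi (by positivity) (by linarith [pi_pos])
  have hC : 0 < cos (ξ * ω / 2) := cos_pos_of_mem_Ioo ⟨by linarith [pi_pos], by linarith⟩
  have hden : 0 < 2 * ξ * sin (ξ * ω / 2) := by positivity
  have h0 : (0 : ℝ) ∈ Icc 0 ω := ⟨le_rfl, hω.le⟩
  have hh : ω / 2 ∈ Icc 0 ω := ⟨by positivity, by linarith⟩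
  have hGinf_le : Ginf ≤ cos (ξ * ω / 2) / (2 * ξ * sin (ξ * ω / 2)) := by
    refine hGinf.2 ⟨0, h0, 0, h0, ?_⟩
    rw [hGdef 0 h0 0 h0, if_pos le_rfl, ← cos_neg]
    congr 2; ring
  have hGsup_ge : 1 / (2 * ξ * sin (ξ * ω / 2)) ≤ Gsup := by
    refine hGsup.2 ⟨ω / 2, hh, 0, h0, ?_⟩
    rw [hGdef _ hh 0 h0, if_pos hh.1]
    simp
  have hGinf0 : 0 < Ginf := by
    obtain ⟨t, ht, s, hs, hts⟩ := hGinf.1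
    rw [← hts, hGdef t ht s hs]
    have hcos : ∀ w, |w| ≤ ω / 2 → 0 < cos (ξ * w) := fun w hw => by
      have h1 := abs_le.1 hw
      exact cos_pos_of_mem_Ioo ⟨by nlinarith, by nlinarith⟩
    split_ifs with h
    · exact div_pos (hcos _ (abs_le.2 ⟨by linarith, by linarith [ht.2, hs.1]⟩)) hden
    · exact div_pos (hcos _ (abs_le.2 ⟨by linarith [ht.1, hs.2], by linarith⟩)) hden
  have hM0 : 0 ≤ M := by
    obtain ⟨t, -, s, -, hts⟩ := hM.1
    rw [← hts]; exact abs_nonneg _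
  have hGsup0 : 0 < Gsup := lt_of_lt_of_le (by positivity) hGsup_ge
  have hσ0 : 0 < σ := by rw [hσ]; positivity
  have hσC : σ ≤ cos (ξ * ω / 2) := by
    rw [hσ, div_le_iff₀ (by positivity)]
    refine hGinf_le.trans ?_
    rw [div_eq_mul_one_div]
    exact mul_le_mul_of_nonneg_left (by linarith) hC.le
  have hcst0 : 0 < cst := by
    obtain ⟨t, -, ht⟩ := hcst.1
    rw [← ht]; exact hcpos t
  have hGω : Ginf * ω ≤ 1 / ξ ^ 2 := by
    have h1 : ξ * ω / 2 * cos (ξ * ω / 2) ≤ sin (ξ * ω / 2) := by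
      have := lt_tan (x := ξ * ω / 2) (by positivity) (by linarith)
      rw [tan_eq_sin_div_cos, lt_div_iff₀ hC] at this
      exact this.le
    refine (mul_le_mul_of_nonneg_right hGinf_le hω.le).trans ?_
    rw [div_mul_eq_mul_div, div_le_div_iff₀ hden (by positivity)]
    nlinarith [mul_le_mul_of_nonneg_left h1 hξ.le]
  set k := √α * ξ with hk
  have hsα : 0 < √α := sqrt_pos.2 hα0
  have hsα1 : √α ≤ 1 := sqrt_le_one.2 hα1.le
  have hk0 : 0 < k := mul_pos hsα hξ
  have hk2 : k ^ 2 = α * ξ ^ 2 := by rw [hk, mul_pow, sq_sqrt hα0.le]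
  have hkω : k * ω < π := by
    rw [hk, mul_assoc]
    exact (mul_le_of_le_one_left hξω0.le hsα1).trans_lt hξω
  have hCk : 0 < cos (k * ω / 2) :=
    cos_pos_of_mem_Ioo ⟨by linarith [pi_pos, mul_pos hk0 hω], by linarith⟩
  have hCC : cos (ξ * ω / 2) ≤ cos (k * ω / 2) ^ ρ₂ := by
    have h1 := cos_le_cos_mul_rpow hsα hsα1 (θ := ξ * ω / 2) (by positivity) (by linarith)
    rw [sq_sqrt hα0.le, show √α * (ξ * ω / 2) = k * ω / 2 by rw [hk]; ring] at h1
    refine h1.trans (rpow_le_rpow_of_exponent_ge hCk (cos_le_one _) ?_)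
    rw [hα, one_div_one_div]
    linarith
  have hσr : 0 < σ * r := mul_pos hσ0 hr
  rw [← hk2]
  refine exists_solution_of_lower (y := (σ * r) ^ α) (cst := cst) hω hρ₁ hρ₂ hk0 hkω hb hbper
    hc hcper he heper hepos hcst0 (least_le_of_periodic hω hcper hcst) (by positivity)
    (fun t => ?_) ?_
  · rw [← rpow_mul hσr.le, show α * ρ₁ = 1 - α by linarith]
    have h1 := least_le_of_periodic hω heper hest t
    have h2 := least_le_of_periodic hω hbper hbst t
    have h3 : 0 ≤ (σ * r) ^ (1 - α) := by positivity
    nlinarith [mul_le_mul_of_nonneg_right h1 h3]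
  · have hs0 : 0 < α + α * ρ₂ := by positivity
    rw [← rpow_mul hσr.le, show α * (1 + ρ₂) = α + α * ρ₂ by ring, mul_rpow hσ0.le hr.le]
    have h1 : r ^ (α + α * ρ₂) ≤ Ginf * cst * ω * σ ^ (1 - α - α * ρ₂) / α := by
      have := rpow_le_rpow hr.le hH1b hs0.le
      rwa [← rpow_mul (by positivity), one_div_mul_cancel hs0.ne', rpow_one] at this
    have h2 : σ ^ (α + α * ρ₂) * σ ^ (1 - α - α * ρ₂) = σ := by
      rw [← rpow_add hσ0, show α + α * ρ₂ + (1 - α - α * ρ₂) = 1 by ring, rpow_one]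
    have h3 : ξ ^ 2 * (Ginf * ω) ≤ 1 := by
      have := mul_le_mul_of_nonneg_left hGω (sq_nonneg ξ)
      rwa [mul_one_div_cancel (by positivity)] at this
    calc k ^ 2 * (σ ^ (α + α * ρ₂) * r ^ (α + α * ρ₂))
        ≤ α * ξ ^ 2 * (σ ^ (α + α * ρ₂) * (Ginf * cst * ω * σ ^ (1 - α - α * ρ₂) / α)) := by
          rw [hk2]; gcongr
      _ = (ξ ^ 2 * (Ginf * ω)) * cst * (σ ^ (α + α * ρ₂) * σ ^ (1 - α - α * ρ₂)) := by
          field_simp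
      _ ≤ 1 * cst * cos (k * ω / 2) ^ ρ₂ := by
          rw [h2]; gcongr; exact hσC.trans hCC
      _ = cst * cos (k * ω / 2) ^ ρ₂ := by ring
end

section
/- Fix ω > 0 and constants ρ₂ > ρ₁ > 0; set α = 1/(ρ₁+1). Let q = αξ² be a positive constant with 0 < ξ < π/ω, let b : ℝ → ℝ be continuous and ω-periodic, and let c, e : ℝ → (0,∞) be continuous ω-periodic functions. Let G be the explicit Green's function G(t,s) = cos(ξ(t−s−ω/2))/(2ξ sin(ξω/2)) for 0 ≤ s ≤ t ≤ ω, G(t,s) = cos(ξ(t−s+ω/2))/(2ξ sin(ξω/2)) for 0 ≤ t < s ≤ ω, and define G*, G_*, M, σ, δ from G. Assume (H₂): (1−α)(G* + δG_*)δ²ω/σ < 1, and assume there exists r > 0 satisfying (H₃): e_*(σr)^{1−α} + b_* ≥ 0 and r ≤ (G_* c_* ω/α)^{1/(α+αρ₂)}. Then the equation x'' + q x = b(t)/x^{ρ₁} + c(t)/x^{ρ₂} + e(t) has at least one positive ω-periodic solution, i.e. a twice continuously differentiable ω-periodic function x : ℝ → (0,∞) satisfying the equation for all t. -/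
open Real Set

/-!
Put `κ = √α ξ`, so that `κ ω < π` and the equation is `x'' + κ² x = h`, where `h` is its right-hand
side. Let `x₀ = (σ r) ^ α`, and truncate the singular terms by replacing `x` with `max x x₀` in
them. The truncated right-hand side is bounded and Lipschitz in `x`, so a periodic solution `x`
exists (`exists_periodic_truncated`): in rotating coordinates the Poincaré map has bounded
displacement, and periodicity is a fixed point problem in a disc (`fixed_point_disc`). It remains
to show that `x ≥ x₀`, for then the truncation has no effect.

* Since `x₀ ^ ρ₁ = (σ r) ^ (1 - α)`, the first part of `(H₃)` says that
  `b / (max x x₀) ^ ρ₁ + e ≥ 0`, hence `h ≥ c / (max x x₀) ^ ρ₂ ≥ 0`.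
* If `x < r ^ α` everywhere, then `h ≥ c_* r ^ (-α ρ₂)`, so by `periodic_lower_bound`
  `x ≥ c_* r ^ (-α ρ₂) / (α ξ²)`. Because `G_* ω ≤ 1 / ξ²` (`green_bounds`), the second part of
  `(H₃)` makes this at least `r ^ α`, a contradiction. So `x` reaches the level `r ^ α`.
* The Harnack inequality `periodic_harnack` now gives `x ≥ cos (κ ω / 2) r ^ α` everywhere. Finally
  `cos (√α θ) ≥ (cos θ) ^ α` for `θ = ξ ω / 2` (`cos_rpow_le_cos_sqrt_mul`) and
  `σ ≤ cos (ξ ω / 2)` (`green_bounds`), so this is at least `(σ r) ^ α = x₀`.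
-/

/-! ### A planar fixed point theorem -/

/-- Brouwer's theorem for a disc of the plane mapped into its interior. If `N` had no fixed point,
`z - N z` (extended to the plane through the radial retraction `p`) would have a continuous
logarithm `h`. On the boundary circle `z - N z = z (1 - N z / z)` with `|N z / z| < 1`, so
`h - Log (1 - N z / z)` would be a continuous logarithm of `z` there, which does not exist. -/
theorem fixed_point_disc {N : ℂ → ℂ} {R : ℝ} (hR : 0 < R)
    (hN : ContinuousOn N (Metric.closedBall 0 R))
    (hb : ∀ z ∈ Metric.closedBall (0 : ℂ) R, ‖N z‖ < R) :
    ∃ z ∈ Metric.closedBall (0 : ℂ) R, N z = z := by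
  by_contra! hne
  set p : ℂ → ℂ := fun z => ((R / max R ‖z‖ : ℝ) : ℂ) * z with hp
  have hmax : ∀ z : ℂ, 0 < max R ‖z‖ := fun z => lt_max_of_lt_left hR
  have hpc : Continuous p := by
    have : Continuous fun z : ℂ => R / max R ‖z‖ :=
      continuous_const.div (by fun_prop) fun z => (hmax z).ne'
    exact (Complex.continuous_ofReal.comp this).mul continuous_id
  have hpm : ∀ z, p z ∈ Metric.closedBall (0 : ℂ) R := by
    intro z
    rw [mem_closedBall_zero_iff, hp]
    simp only [norm_mul, Complex.norm_real, Real.norm_eq_abs]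
    rw [abs_of_pos (div_pos hR (hmax z)), div_mul_eq_mul_div, div_le_iff₀ (hmax z)]
    exact mul_le_mul_of_nonneg_left (le_max_right _ _) hR.le
  have hpid : ∀ z : ℂ, ‖z‖ ≤ R → p z = z := by
    intro z hz
    simp [hp, max_eq_left hz, hR.ne']
  have hNp : Continuous fun z => N (p z) := hN.comp_continuous hpc hpm
  have hg0 : ∀ z, z - N (p z) ≠ 0 := by
    intro z hz
    have h1 : z = N (p z) := sub_eq_zero.1 hz
    have h2 : ‖z‖ < R := by rw [h1]; exact hb _ (hpm z)
    rw [hpid z h2.le] at h1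
    exact hne z (mem_closedBall_zero_iff.2 h2.le) h1.symm
  have hsc : IsSimplyConnected (univ : Set ℂ) := by
    have := convex_univ.contractibleSpace (univ_nonempty (α := ℂ))
    unfold IsSimplyConnected; infer_instance
  obtain ⟨h, hhc, hh⟩ := Complex.exists_continuousOn_eqOn_exp_comp hsc isOpen_univ
    (g := fun z => z - N (p z)) (continuous_id.sub hNp).continuousOn (by rintro ⟨z, -, hz⟩; exact hg0 z hz)
  have hhc : Continuous h := by simpa using hhc
  -- the boundary circle, and the unit-disc perturbation on it
  set z : ℝ → ℂ := fun θ => (R : ℂ) * Complex.exp (θ * Complex.I) with hz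
  have hzc : Continuous z := by fun_prop
  have hzn : ∀ θ, ‖z θ‖ = R := by
    intro θ; simp [hz, Complex.norm_exp_ofReal_mul_I, abs_of_pos hR]
  have hz0 : ∀ θ, z θ ≠ 0 := fun θ => norm_pos_iff.1 (by rw [hzn]; exact hR)
  have hslit : ∀ θ, 1 - N (p (z θ)) / z θ ∈ Complex.slitPlane := by
    intro θ
    left
    have : ‖N (p (z θ)) / z θ‖ < 1 := by
      rw [norm_div, hzn, div_lt_one hR]; exact hb _ (hpm _)
    have := (Complex.re_le_norm _).trans_lt this
    simp only [Complex.sub_re, Complex.one_re]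
    linarith
  set k : ℝ → ℂ := fun θ => h (z θ) - Complex.log (1 - N (p (z θ)) / z θ) - θ * Complex.I with hk
  have hkc : Continuous k := by
    have h1 : Continuous fun θ => 1 - N (p (z θ)) / z θ :=
      continuous_const.sub ((hNp.comp hzc).div hzc hz0)
    have h2 := h1.clog hslit
    exact ((hhc.comp hzc).sub h2).sub (by fun_prop)
  have hke : ∀ θ, Complex.exp (k θ) = R := by
    intro θ
    have h1 : Complex.exp (h (z θ)) = z θ - N (p (z θ)) := hh (mem_univ _)
    have h3 := Complex.exp_ne_zero (θ * Complex.I)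
    have h4 : z θ - N (p (z θ)) = z θ * (1 - N (p (z θ)) / z θ) := by
      have := hz0 θ; field_simp
    have h5 := Complex.slitPlane_ne_zero (hslit θ)
    rw [hk]
    simp only [Complex.exp_sub]
    rw [Complex.exp_log h5, h1, h4, mul_div_assoc, div_self h5, mul_one]
    simp only [hz]
    field_simp
  -- two lifts of the same constant map through the covering `exp` that agree at `0` are equal
  have hconst : k = fun _ => k 0 :=
    Complex.isCoveringMap_exp.eq_of_comp_eq hkc continuous_const
      (by funext θ; simp [hke]) 0 rfl
  have h1 := congrFun hconst (2 * π)
  have h2 : z (2 * π) = z 0 := by simp [hz, Complex.exp_two_pi_mul_I]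
  simp only [hk, h2] at h1
  have h3 : ((2 * π : ℝ) : ℂ) * Complex.I = 0 := by
    have := sub_right_injective h1
    simp at this
  simp [Real.pi_ne_zero] at h3

/-! ### Periodic solutions of bounded perturbations of a nonresonant oscillator -/

/-- For `F` bounded, Lipschitz in `x` and `ω`-periodic in `t`, the equation
`x'' + κ² x = F t x` has an `ω`-periodic solution when `0 < κ ω < π`. It is written as a first
order system for `(x, v)`, and `h` is the forcing term along the solution.

With `E t = exp (i κ t)` and `v + i κ x = E t * y t`, the equation becomes the bounded one
`y' = E (-t) * F t (Im (E t * y) / κ)`, and the periodicity condition is `E ω * y ω = y 0`. In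
terms of the flow `Φ` this reads `Y = E ω / (1 - E ω) * (Φ (Y, ω) - Y)`, whose right-hand side is
bounded by `C ω / |1 - E ω|`. -/
theorem exists_periodic_of_bounded {ω κ C : ℝ} {K : NNReal} (hω : 0 < ω) (hκ : 0 < κ)
    (hκω : κ * ω < π) (F : ℝ → ℝ → ℝ) (hF : ∀ x, Continuous fun t => F t x)
    (hper : ∀ t x, F (t + ω) x = F t x) (hbd : ∀ t x, |F t x| ≤ C)
    (hlip : ∀ t, LipschitzWith K (F t)) :
    ∃ x v h : ℝ → ℝ, Continuous h ∧ Function.Periodic x ω ∧ Function.Periodic v ω ∧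
      (∀ t, h t = F t (x t)) ∧
      (∀ t, HasDerivAt x (v t) t) ∧ ∀ t, HasDerivAt v (h t - κ ^ 2 * x t) t := by
  have hC : 0 ≤ C := (abs_nonneg _).trans (hbd 0 0)
  set E : ℝ → ℂ := fun t => Complex.exp ((κ * t : ℝ) * Complex.I) with hE
  have hEn : ∀ t, ‖E t‖ = 1 := fun t => Complex.norm_exp_ofReal_mul_I _
  have hE0 : ∀ t, E t ≠ 0 := fun t => Complex.exp_ne_zero _
  have hEadd : ∀ s t, E (s + t) = E s * E t := by
    intro s t; simp only [hE, ← Complex.exp_add]; push_cast; ring_nf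
  have hEneg : ∀ t, E (-t) = (E t)⁻¹ := by
    intro t; simp only [hE, ← Complex.exp_neg]; push_cast; ring_nf
  have hE00 : E 0 = 1 := by simp [hE]
  have hEd : ∀ t, HasDerivAt E (κ * Complex.I * E t) t := by
    intro t
    have h1 : HasDerivAt (fun t : ℝ => ((κ * t : ℝ) : ℂ) * Complex.I) (κ * Complex.I) t := by
      have := ((hasDerivAt_id t).const_mul κ).ofReal_comp.mul_const Complex.I
      simpa using this
    have := h1.cexp
    simpa [hE, mul_comm] using this
  have hEc : Continuous E := by fun_prop
  -- the rotation by `κ ω` has no fixed direction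
  have hEω : 1 - E ω ≠ 0 := by
    intro h
    have h1 : (E ω).im = 0 := by rw [← sub_eq_zero.1 h]; simp
    simp only [hE, Complex.exp_ofReal_mul_I_im] at h1
    exact (sin_pos_of_pos_of_lt_pi (by positivity) hκω).ne' h1
  set f : ℝ → ℂ → ℂ := fun t y => E (-t) * (F t ((E t * y).im / κ) : ℝ) with hf
  have hFlip : ∀ t x y, |F t x - F t y| ≤ K * |x - y| := by
    intro t x y; simpa [Real.dist_eq] using (hlip t).dist_le_mul x y
  have hFc : ∀ g : ℝ → ℝ, ∀ s : Set ℝ, ContinuousOn g s → ContinuousOn (fun t => F t (g t)) s := by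
    intro g s hg
    have : Continuous (Function.uncurry F) :=
      continuous_prod_of_continuous_lipschitzWith' (Function.uncurry F) K hlip hF
    exact this.comp_continuousOn (continuousOn_id.prodMk hg)
  have hfn : ∀ t y, ‖f t y‖ ≤ C := by
    intro t y
    simp only [hf, norm_mul, hEn, one_mul, Complex.norm_real, Real.norm_eq_abs]
    exact hbd _ _
  set R : ℝ := C * ω / ‖1 - E ω‖ + 1 with hR
  have hRpos : 0 < R := by positivity
  have hPL : IsPicardLindelof f (⟨0, le_rfl, hω.le⟩ : Icc 0 ω) (0 : ℂ)
      (⟨R + C * ω, by positivity⟩) ⟨R, hRpos.le⟩ ⟨C, hC⟩ (K / κ.toNNReal) := by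
    refine ⟨fun t _ => ?_, fun y _ => ?_, fun t _ y _ => hfn t y, ?_⟩
    · refine (LipschitzWith.of_dist_le_mul fun y z => ?_).lipschitzOnWith
      rw [dist_eq_norm, dist_eq_norm]
      simp only [hf, ← mul_sub, norm_mul, hEn, one_mul, ← Complex.ofReal_sub, Complex.norm_real,
        Real.norm_eq_abs]
      refine (hFlip _ _ _).trans ?_
      rw [← sub_div, ← Complex.sub_im, ← mul_sub, abs_div, abs_of_pos hκ]
      have h1 : |(E t * (y - z)).im| ≤ ‖y - z‖ := by
        refine (Complex.abs_im_le_norm _).trans ?_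
        rw [norm_mul, hEn, one_mul]
      have : (K : ℝ) * (|(E t * (y - z)).im| / κ) ≤ K * (‖y - z‖ / κ) := by gcongr
      refine this.trans (le_of_eq ?_)
      rw [NNReal.coe_div, Real.coe_toNNReal _ hκ.le]
      ring
    · have h1 : ContinuousOn (fun t => F t ((E t * y).im / κ)) (Icc 0 ω) :=
        hFc _ _ (by fun_prop)
      exact (hEc.comp continuous_neg).continuousOn.mul
        (Complex.continuous_ofReal.comp_continuousOn h1)
    · change C * max (ω - 0) (0 - 0) ≤ R + C * ω - R
      simp [hω.le]
  obtain ⟨Φ, hΦ, hΦc⟩ := hPL.exists_forall_mem_closedBall_eq_hasDerivWithinAt_continuousOn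
  simp only at hΦ hΦc
  have hωm : ω ∈ Icc 0 ω := ⟨hω.le, le_rfl⟩
  have hdisp : ∀ z ∈ Metric.closedBall (0 : ℂ) R, ‖Φ (z, ω) - z‖ ≤ C * ω := by
    intro z hz
    have := norm_image_sub_le_of_norm_deriv_le_segment' (f := fun t => Φ (z, t)) (hΦ z hz).2
      (fun t _ => hfn t _) ω hωm
    simpa [(hΦ z hz).1] using this
  obtain ⟨Y, hY, hYfix⟩ := fixed_point_disc (N := fun z => E ω / (1 - E ω) * (Φ (z, ω) - z)) hRpos
    (by
      have : ContinuousOn (fun z => Φ (z, ω)) (Metric.closedBall 0 R) :=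
        hΦc.comp (by fun_prop) fun z hz => ⟨hz, hωm⟩
      exact continuousOn_const.mul (this.sub continuousOn_id))
    (by
      intro z hz
      rw [norm_mul, norm_div, hEn, one_div, inv_mul_eq_div]
      have : ‖Φ (z, ω) - z‖ / ‖1 - E ω‖ ≤ C * ω / ‖1 - E ω‖ := by
        gcongr; exact hdisp z hz
      linarith)
  set y : ℝ → ℂ := fun t => Φ (Y, t) with hy
  have hy0 : y 0 = Y := (hΦ Y hY).1
  have hyd : ∀ t ∈ Icc 0 ω, HasDerivWithinAt y (f t (y t)) (Icc 0 ω) t := (hΦ Y hY).2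
  have hyω : E ω * y ω = Y := by
    have h1 : E ω / (1 - E ω) * (y ω - Y) = Y := hYfix
    field_simp at h1
    linear_combination h1
  have hyc : ContinuousOn y (Icc 0 ω) := fun t ht => (hyd t ht).continuousWithinAt
  set xo : ℝ → ℝ := fun t => (E t * y t).im / κ with hxo
  have hxoω : xo 0 = xo ω := by simp only [hxo, hyω, hy0, hE00, one_mul]
  have hxoc : ContinuousOn xo (Icc 0 ω) :=
    (Complex.continuous_im.comp_continuousOn (hEc.continuousOn.mul hyc)).div_const _
  -- the forcing term along the solution, extended periodically
  have := Fact.mk hω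
  set h : ℝ → ℝ := fun t => AddCircle.liftIco ω 0 (fun t => F t (xo t)) (t : AddCircle ω) with hh
  have hhc : Continuous h := by
    refine (AddCircle.liftIco_zero_continuous ?_ (hFc _ _ hxoc)).comp (AddCircle.continuous_mk' ω)
    have := hper 0 (xo 0)
    rw [zero_add] at this
    rw [← hxoω, this]
  have hhp : Function.Periodic h ω := by
    intro t; simp [hh]
  have hho : ∀ t ∈ Ico 0 ω, h t = F t (xo t) := fun t ht =>
    AddCircle.liftIco_zero_coe_apply ht
  have hgc : Continuous fun t => E (-t) * (h t : ℂ) := by fun_prop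
  -- integrating the periodic forcing extends `y` from `[0, ω]` to the whole line
  set Z : ℝ → ℂ := fun t => Y + ∫ s in (0:ℝ)..t, E (-s) * (h s : ℂ) with hZ
  have hZd : ∀ t, HasDerivAt Z (E (-t) * (h t : ℂ)) t := fun t =>
    (intervalIntegral.integral_hasDerivAt_right (hgc.intervalIntegrable _ _)
      (hgc.stronglyMeasurableAtFilter _ _) hgc.continuousAt).const_add _
  have hZ0 : Z 0 = Y := by simp [hZ]
  have hZy : ∀ t ∈ Icc 0 ω, Z t = y t := by
    intro t ht
    have := constant_of_has_deriv_right_zero (f := fun t => Z t - y t) (a := 0) (b := ω)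
      ((continuous_iff_continuousAt.2 fun t => (hZd t).continuousAt).continuousOn.sub hyc)
      (by
        intro s hs
        have h1 := (hyd s (Ico_subset_Icc_self hs)).mono_of_mem_nhdsWithin
          (Icc_mem_nhdsGE_of_mem hs)
        have h2 := (hZd s).hasDerivWithinAt (s := Ici s) |>.sub h1
        rw [hho s hs] at h2
        simpa [hf, hxo] using! h2) t ht
    simp only [hZ0, hy0, sub_self] at this
    exact sub_eq_zero.1 this
  have hZω : E ω * Z ω = Z 0 := by rw [hZy ω hωm, hyω, hZ0]
  have hZp : ∀ t, E ω * Z (t + ω) = Z t := by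
    have hd : ∀ t, HasDerivAt (fun t => E ω * Z (t + ω) - Z t) 0 t := by
      intro t
      have h1 := (((hZd (t + ω)).comp_add_const t ω).const_mul (E ω)).sub (hZd t)
      refine h1.congr_deriv ?_
      rw [hhp t, hEneg, hEneg, hEadd]
      have := hE0 ω
      have := hE0 t
      field_simp
      ring
    intro t
    have := is_const_of_deriv_eq_zero (fun t => (hd t).differentiableAt) (fun t => (hd t).deriv) t 0
    simp only [zero_add, hZω, sub_self] at this
    exact sub_eq_zero.1 this
  have hWp : ∀ t, E (t + ω) * Z (t + ω) = E t * Z t := by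
    intro t; rw [hEadd, mul_assoc, hZp]
  have hWd : ∀ t, HasDerivAt (fun t => E t * Z t) (κ * Complex.I * (E t * Z t) + h t) t := by
    intro t
    refine ((hEd t).mul (hZd t)).congr_deriv ?_
    rw [hEneg]
    have := hE0 t
    field_simp
  set x : ℝ → ℝ := fun t => (E t * Z t).im / κ with hx
  have hxp : Function.Periodic x ω := fun t => by simp only [hx, hWp]
  refine ⟨x, fun t => (E t * Z t).re, h, hhc, hxp, fun t => by simp only [hWp], ?_, ?_, ?_⟩
  · have hp : Function.Periodic (fun t => h t - F t (x t)) ω := by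
      intro t; simp only [hhp t, hxp t, hper]
    intro t
    obtain ⟨s, hs, hts⟩ := hp.exists_mem_Ico₀ hω t
    have h1 : x s = xo s := by simp only [hx, hxo, hZy s (Ico_subset_Icc_self hs)]
    simp only [hho s hs, h1, sub_self] at hts
    linarith
  · intro t
    have h1 := (Complex.imCLM.hasFDerivAt.comp_hasDerivAt t (hWd t)).div_const κ
    refine h1.congr_deriv ?_
    simp
    field_simp
  · intro t
    have h1 := Complex.reCLM.hasFDerivAt.comp_hasDerivAt t (hWd t)
    refine h1.congr_deriv ?_
    simp [hx]
    field_simp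
    ring

/-! ### Sign and Harnack estimates for periodic solutions -/

/-- Green's formula for an `ω`-periodic solution of `x'' + κ² x = h`, with the integration
window moved to `[t, t + ω]`, where the kernel is a single cosine. -/
theorem periodic_representation {ω κ : ℝ} {x v h : ℝ → ℝ}
    (hxp : Function.Periodic x ω) (hvp : Function.Periodic v ω) (hh : Continuous h)
    (hx : ∀ t, HasDerivAt x (v t) t) (hv : ∀ t, HasDerivAt v (h t - κ ^ 2 * x t) t) (t : ℝ) :
    ∫ s in (0:ℝ)..ω, cos (κ * (s - ω / 2)) * h (s + t) = 2 * κ * sin (κ * ω / 2) * x t := by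
  have hd : ∀ s ∈ uIcc 0 ω, HasDerivAt
      (fun s => cos (κ * (s - ω / 2)) * v (s + t) + κ * sin (κ * (s - ω / 2)) * x (s + t))
      (cos (κ * (s - ω / 2)) * h (s + t)) s := by
    intro s _
    have hl : HasDerivAt (fun s => κ * (s - ω / 2)) κ s := by
      simpa using ((hasDerivAt_id s).sub_const (ω / 2)).const_mul κ
    have h1 := (hl.cos.mul ((hv (s + t)).comp_add_const s t)).add
      ((hl.sin.const_mul κ).mul ((hx (s + t)).comp_add_const s t))
    refine h1.congr_deriv ?_
    ring
  rw [intervalIntegral.integral_eq_sub_of_hasDerivAt hd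
    (Continuous.intervalIntegrable (by fun_prop) _ _)]
  have e1 : κ * (ω - ω / 2) = κ * ω / 2 := by ring
  have e2 : κ * (0 - ω / 2) = -(κ * ω / 2) := by ring
  rw [e1, e2, add_comm ω t, hxp t, hvp t, zero_add, cos_neg, sin_neg]
  ring

/-- Harnack inequality: for `h ≥ 0` the kernel of `periodic_representation` lies between
`cos (κ ω / 2)` and `1`, so any two values of `x` are comparable. -/
theorem periodic_harnack {ω κ : ℝ} {x v h : ℝ → ℝ} (hω : 0 < ω) (hκ : 0 < κ) (hκω : κ * ω < π)
    (hxp : Function.Periodic x ω) (hvp : Function.Periodic v ω) (hh : Continuous h)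
    (hx : ∀ t, HasDerivAt x (v t) t) (hv : ∀ t, HasDerivAt v (h t - κ ^ 2 * x t) t)
    (h0 : ∀ t, 0 ≤ h t) (hhp : Function.Periodic h ω) (t t' : ℝ) :
    cos (κ * ω / 2) * x t' ≤ x t := by
  have hκω0 : 0 < κ * ω := mul_pos hκ hω
  have hs : 0 < 2 * κ * sin (κ * ω / 2) := by
    have := sin_pos_of_pos_of_lt_pi (x := κ * ω / 2) (by linarith) (by linarith)
    positivity
  have hcθ : 0 ≤ cos (κ * ω / 2) := cos_nonneg_of_mem_Icc ⟨by linarith, by linarith⟩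
  have hI : ∀ t, ∫ s in (0:ℝ)..ω, h (s + t) = ∫ s in (0:ℝ)..ω, h s := by
    intro t
    rw [intervalIntegral.integral_comp_add_right, zero_add, add_comm ω t,
      hhp.intervalIntegral_add_eq t 0, zero_add]
  have hup : 2 * κ * sin (κ * ω / 2) * x t' ≤ ∫ s in (0:ℝ)..ω, h s := by
    rw [← periodic_representation hxp hvp hh hx hv t', ← hI t']
    refine intervalIntegral.integral_mono_on hω.le (Continuous.intervalIntegrable (by fun_prop) _ _)
      (Continuous.intervalIntegrable (by fun_prop) _ _) fun s _ => ?_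
    exact mul_le_of_le_one_left (h0 _) (cos_le_one _)
  have hlow : cos (κ * ω / 2) * ∫ s in (0:ℝ)..ω, h s ≤ 2 * κ * sin (κ * ω / 2) * x t := by
    rw [← periodic_representation hxp hvp hh hx hv t, ← hI t,
      ← intervalIntegral.integral_const_mul]
    refine intervalIntegral.integral_mono_on hω.le (Continuous.intervalIntegrable (by fun_prop) _ _)
      (Continuous.intervalIntegrable (by fun_prop) _ _) fun s hs => ?_
    refine mul_le_mul_of_nonneg_right ?_ (h0 _)
    rw [← cos_abs (κ * (s - ω / 2))]
    have : |κ * (s - ω / 2)| ≤ κ * ω / 2 := by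
      rw [abs_le]; constructor <;> nlinarith [hs.1, hs.2]
    exact cos_le_cos_of_nonneg_of_le_pi (abs_nonneg _) (by linarith) this
  have := mul_le_mul_of_nonneg_left hup hcθ
  have h2 : 2 * κ * sin (κ * ω / 2) * (cos (κ * ω / 2) * x t') ≤
      2 * κ * sin (κ * ω / 2) * x t := by linarith
  exact le_of_mul_le_mul_left h2 hs

/-- The periodic solution for the constant forcing `m` is `m / κ ^ 2`, and the solution operator
is order preserving. -/
theorem periodic_lower_bound {ω κ m : ℝ} {x v h : ℝ → ℝ} (hω : 0 < ω) (hκ : 0 < κ)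
    (hκω : κ * ω < π)
    (hxp : Function.Periodic x ω) (hvp : Function.Periodic v ω) (hh : Continuous h)
    (hx : ∀ t, HasDerivAt x (v t) t) (hv : ∀ t, HasDerivAt v (h t - κ ^ 2 * x t) t)
    (hm : ∀ t, m ≤ h t) (t : ℝ) : m / κ ^ 2 ≤ x t := by
  have hκω0 : 0 < κ * ω := mul_pos hκ hω
  have hs : 0 < 2 * κ * sin (κ * ω / 2) := by
    have := sin_pos_of_pos_of_lt_pi (x := κ * ω / 2) (by linarith) (by linarith)
    positivity
  have hrep := periodic_representation (x := fun t => x t - m / κ ^ 2) (h := fun t => h t - m)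
    (fun t => by simp only [hxp t]) hvp (by fun_prop) (fun t => (hx t).sub_const _)
    (fun t => (hv t).congr_deriv (by field_simp; ring)) t
  have hpos : 0 ≤ 2 * κ * sin (κ * ω / 2) * (x t - m / κ ^ 2) := by
    rw [← hrep]
    refine intervalIntegral.integral_nonneg hω.le fun s hs => ?_
    refine mul_nonneg (cos_nonneg_of_mem_Icc ⟨?_, ?_⟩) (sub_nonneg.2 (hm _)) <;>
      nlinarith [hs.1, hs.2]
  exact sub_nonneg.1 (nonneg_of_mul_nonneg_right hpos hs)

/-! ### Comparison of cosines -/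

theorem tan_mul_le {l t : ℝ} (hl : 0 < l) (hl1 : l < 1) (ht : 0 ≤ t) (ht' : t < π / 2) :
    tan (l * t) ≤ l * tan t := by
  have hc : ∀ s ∈ Ico 0 (π / 2), 0 < cos s ∧ 0 < cos (l * s) ∧ cos s ≤ cos (l * s) := by
    intro s hs
    have h1 : l * s ≤ s := mul_le_of_le_one_left hs.1 hl1.le
    have h0 : 0 ≤ l * s := mul_nonneg hl.le hs.1
    exact ⟨cos_pos_of_mem_Ioo ⟨by linarith [hs.1, pi_pos], hs.2⟩,
      cos_pos_of_mem_Ioo ⟨by linarith [pi_pos], by linarith [hs.2]⟩,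
      cos_le_cos_of_nonneg_of_le_pi h0 (by linarith [hs.2, pi_pos]) h1⟩
  have hd : ∀ s ∈ Ico 0 (π / 2), HasDerivAt (fun s => l * tan s - tan (l * s))
      (l * (1 / cos s ^ 2) - 1 / cos (l * s) ^ 2 * l) s := by
    intro s hs
    obtain ⟨h1, h2, -⟩ := hc s hs
    have hl' : HasDerivAt (fun s => l * s) l s := by
      simpa using (hasDerivAt_id s).const_mul l
    exact ((hasDerivAt_tan h1.ne').const_mul l).sub ((hasDerivAt_tan h2.ne').comp s hl')
  have hmono : MonotoneOn (fun s => l * tan s - tan (l * s)) (Ico 0 (π / 2)) := by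
    refine monotoneOn_of_deriv_nonneg (convex_Ico _ _)
      (fun s hs => (hd s hs).continuousAt.continuousWithinAt)
      (fun s hs => (hd s (interior_subset hs)).differentiableAt.differentiableWithinAt)
      fun s hs => ?_
    rw [(hd s (interior_subset hs)).deriv]
    obtain ⟨h1, h2, h3⟩ := hc s (interior_subset hs)
    have : 1 / cos (l * s) ^ 2 ≤ 1 / cos s ^ 2 := by gcongr
    nlinarith
  have := hmono ⟨le_rfl, by linarith⟩ ⟨ht, ht'⟩ ht
  simp at this
  linarith

/-- The right side divided by the left has nonnegative logarithmic derivative in `θ`, by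
`tan_mul_le` with `l = √a`. It turns the Harnack constant of the oscillator of frequency `√α ξ`
into a power of the one of frequency `ξ`. -/
theorem cos_rpow_le_cos_sqrt_mul {a θ : ℝ} (ha : 0 < a) (ha1 : a < 1) (hθ : 0 ≤ θ)
    (hθ' : θ < π / 2) : cos θ ^ a ≤ cos (√a * θ) := by
  have hl : 0 < √a := sqrt_pos.2 ha
  have hl1 : √a < 1 := by rw [sqrt_lt' one_pos]; simpa using ha1
  have hc : ∀ s ∈ Ico 0 (π / 2), 0 < cos s ∧ 0 < cos (√a * s) := by
    intro s hs
    have h1 : √a * s ≤ s := mul_le_of_le_one_left hs.1 hl1.le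
    have h0 : 0 ≤ √a * s := mul_nonneg hl.le hs.1
    exact ⟨cos_pos_of_mem_Ioo ⟨by linarith [hs.1, pi_pos], hs.2⟩,
      cos_pos_of_mem_Ioo ⟨by linarith [pi_pos], by linarith [hs.2]⟩⟩
  have hd : ∀ s ∈ Ico 0 (π / 2), HasDerivAt (fun s => log (cos (√a * s)) - a * log (cos s))
      ((-sin (√a * s) * √a) / cos (√a * s) - a * (-sin s / cos s)) s := by
    intro s hs
    obtain ⟨h1, h2⟩ := hc s hs
    have hl' : HasDerivAt (fun s => √a * s) (√a) s := by
      simpa using (hasDerivAt_id s).const_mul (√a)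
    exact (hl'.cos.log h2.ne').sub (((hasDerivAt_cos s).log h1.ne').const_mul a)
  have hmono : MonotoneOn (fun s => log (cos (√a * s)) - a * log (cos s)) (Ico 0 (π / 2)) := by
    refine monotoneOn_of_deriv_nonneg (convex_Ico _ _)
      (fun s hs => (hd s hs).continuousAt.continuousWithinAt)
      (fun s hs => (hd s (interior_subset hs)).differentiableAt.differentiableWithinAt)
      fun s hs => ?_
    have hs := interior_subset hs
    rw [(hd s hs).deriv]
    have h1 := tan_mul_le hl hl1 hs.1 hs.2
    rw [tan_eq_sin_div_cos, tan_eq_sin_div_cos] at h1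
    have h2 := mul_le_mul_of_nonneg_left h1 hl.le
    have h3 : √a * (√a * (sin s / cos s)) = a * (sin s / cos s) := by
      rw [← mul_assoc, mul_self_sqrt ha.le]
    have h4 : (-sin (√a * s) * √a) / cos (√a * s) - a * (-sin s / cos s) =
      a * (sin s / cos s) - √a * (sin (√a * s) / cos (√a * s)) := by ring
    linarith
  have := hmono ⟨le_rfl, by linarith [pi_pos]⟩ ⟨hθ, hθ'⟩ hθ
  simp at this
  obtain ⟨h1, h2⟩ := hc θ ⟨hθ, hθ'⟩
  rw [← log_le_log_iff (rpow_pos_of_pos h1 _) h2, log_rpow h1]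
  linarith

/-! ### The truncated equation and the constants of the Green's function -/

theorem exists_nonneg_abs_le_of_periodic {ω : ℝ} (hω : 0 < ω) {b : ℝ → ℝ} (hb : Continuous b)
    (hp : Function.Periodic b ω) : ∃ B : NNReal, ∀ t, |b t| ≤ B := by
  obtain ⟨B, hB⟩ := (hp.isBounded_of_continuous hω.ne' hb).exists_norm_le
  have hB' : ∀ t, |b t| ≤ B := fun t => hB _ (mem_range_self t)
  exact ⟨⟨B, (abs_nonneg _).trans (hB' 0)⟩, hB'⟩

theorem inv_rpow_max_lipschitz {ρ x₀ : ℝ} (hρ : 0 < ρ) (hx₀ : 0 < x₀) :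
    ∃ L : NNReal, LipschitzWith L fun x : ℝ => (max x x₀ ^ ρ)⁻¹ := by
  have hder : ∀ x ∈ Ici x₀, HasDerivAt (fun x : ℝ => x ^ (-ρ)) (-ρ * x ^ (-ρ - 1)) x := by
    intro x hx
    exact hasDerivAt_rpow_const (Or.inl (hx₀.trans_le hx).ne')
  have hL : LipschitzOnWith (ρ * x₀ ^ (-ρ - 1)).toNNReal (fun x : ℝ => x ^ (-ρ)) (Ici x₀) := by
    refine (convex_Ici x₀).lipschitzOnWith_of_nnnorm_deriv_le
      (fun x hx => (hder x hx).differentiableAt) fun x hx => ?_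
    rw [(hder x hx).deriv, ← NNReal.coe_le_coe, coe_nnnorm,
      Real.coe_toNNReal _ (by positivity), norm_mul, norm_neg, Real.norm_of_nonneg hρ.le,
      Real.norm_of_nonneg (rpow_nonneg (hx₀.trans_le hx).le _)]
    exact mul_le_mul_of_nonneg_left (rpow_le_rpow_of_nonpos hx₀ hx (by linarith)) hρ.le
  refine ⟨_, LipschitzWith.of_dist_le_mul (K := (ρ * x₀ ^ (-ρ - 1)).toNNReal) fun x y => ?_⟩
  have h1 := hL.dist_le_mul (max x x₀) (mem_Ici.2 (le_max_right _ _))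
    (max y x₀) (mem_Ici.2 (le_max_right _ _))
  simp only [rpow_neg (hx₀.le.trans (le_max_right _ x₀))] at h1
  refine h1.trans ?_
  gcongr
  rw [Real.dist_eq, Real.dist_eq]
  exact abs_max_sub_max_le_abs x y x₀

/-- Periodic solution of the equation in which `x` is replaced by `max x x₀` in the singular
terms; with this truncation they are bounded and Lipschitz. -/
theorem exists_periodic_truncated {ω κ ρ₁ ρ₂ x₀ : ℝ} (hω : 0 < ω) (hκ : 0 < κ) (hκω : κ * ω < π)
    (hρ₁ : 0 < ρ₁) (hρ₂ : 0 < ρ₂) (hx₀ : 0 < x₀) {b c e : ℝ → ℝ}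
    (hb : Continuous b) (hbper : Function.Periodic b ω)
    (hc : Continuous c) (hcper : Function.Periodic c ω)
    (he : Continuous e) (heper : Function.Periodic e ω) :
    ∃ x v h : ℝ → ℝ, Continuous h ∧ Function.Periodic x ω ∧ Function.Periodic v ω ∧
      (∀ t, h t = b t / max (x t) x₀ ^ ρ₁ + c t / max (x t) x₀ ^ ρ₂ + e t) ∧
      (∀ t, HasDerivAt x (v t) t) ∧ ∀ t, HasDerivAt v (h t - κ ^ 2 * x t) t := by
  obtain ⟨B, hB⟩ := exists_nonneg_abs_le_of_periodic hω hb hbper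
  obtain ⟨C, hC⟩ := exists_nonneg_abs_le_of_periodic hω hc hcper
  obtain ⟨D, hD⟩ := exists_nonneg_abs_le_of_periodic hω he heper
  obtain ⟨L₁, hL₁⟩ := inv_rpow_max_lipschitz hρ₁ hx₀
  obtain ⟨L₂, hL₂⟩ := inv_rpow_max_lipschitz hρ₂ hx₀
  have hinv : ∀ {ρ : ℝ}, 0 < ρ → ∀ x : ℝ, |(max x x₀ ^ ρ)⁻¹| ≤ (x₀ ^ ρ)⁻¹ := by
    intro ρ hρ x
    have h1 : x₀ ≤ max x x₀ := le_max_right _ _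
    have h2 : 0 < max x x₀ := hx₀.trans_le h1
    rw [abs_of_pos (by positivity)]
    gcongr
  refine exists_periodic_of_bounded (C := B * (x₀ ^ ρ₁)⁻¹ + C * (x₀ ^ ρ₂)⁻¹ + D)
    (K := B * L₁ + C * L₂) hω hκ hκω
    (fun t x => b t / max x x₀ ^ ρ₁ + c t / max x x₀ ^ ρ₂ + e t) ?_ ?_ ?_ ?_
  · intro x; fun_prop
  · intro t x; simp only [hbper t, hcper t, heper t]
  · intro t x
    simp only [div_eq_mul_inv]
    refine (abs_add_three _ _ _).trans ?_
    rw [abs_mul, abs_mul]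
    gcongr
    exacts [hB t, hinv hρ₁ x, hC t, hinv hρ₂ x, hD t]
  · intro t
    refine LipschitzWith.of_dist_le_mul fun x y => ?_
    have h1 := hL₁.dist_le_mul x y
    have h2 := hL₂.dist_le_mul x y
    rw [Real.dist_eq] at h1 h2
    rw [Real.dist_eq]
    have e1 : b t / max x x₀ ^ ρ₁ + c t / max x x₀ ^ ρ₂ + e t -
        (b t / max y x₀ ^ ρ₁ + c t / max y x₀ ^ ρ₂ + e t) =
        b t * ((max x x₀ ^ ρ₁)⁻¹ - (max y x₀ ^ ρ₁)⁻¹) +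
        c t * ((max x x₀ ^ ρ₂)⁻¹ - (max y x₀ ^ ρ₂)⁻¹) := by ring
    rw [e1]
    refine (abs_add_le _ _).trans ?_
    rw [abs_mul, abs_mul]
    calc _ ≤ B * (L₁ * dist x y) + C * (L₂ * dist x y) := by
          gcongr
          exacts [hB t, hC t]
      _ = _ := by push_cast; ring

/-- What the proof needs to know about `G`: `G_* ω ≤ 1 / ξ²` (the average bound, as the integral of
`G t` over a period is `1 / ξ²`) and `σ ≤ G_* / G^* ≤ cos (ξ ω / 2)`. -/
theorem green_bounds {ω ξ Gsup Ginf M σ : ℝ} (hω : 0 < ω) (hξ : 0 < ξ) (hξπ : ξ * ω < π)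
    {G : ℝ → ℝ → ℝ}
    (hGdef : ∀ t ∈ Set.Icc 0 ω, ∀ s ∈ Set.Icc 0 ω,
      G t s = if s ≤ t then Real.cos (ξ * (t - s - ω / 2)) / (2 * ξ * Real.sin (ξ * ω / 2))
              else Real.cos (ξ * (t - s + ω / 2)) / (2 * ξ * Real.sin (ξ * ω / 2)))
    (hGsup : IsGreatest {x | ∃ t ∈ Set.Icc 0 ω, ∃ s ∈ Set.Icc 0 ω, G t s = x} Gsup)
    (hGinf : IsLeast {x | ∃ t ∈ Set.Icc 0 ω, ∃ s ∈ Set.Icc 0 ω, G t s = x} Ginf)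
    (hM : 0 ≤ M) (hσ : σ = Ginf / (Gsup + M)) :
    0 < Ginf ∧ Ginf * ω ≤ 1 / ξ ^ 2 ∧ 0 < σ ∧ σ ≤ cos (ξ * ω / 2) := by
  have hξω : 0 < ξ * ω := mul_pos hξ hω
  set θ := ξ * ω / 2 with hθ
  have hsin : 0 < sin θ := sin_pos_of_pos_of_lt_pi (by linarith) (by linarith)
  have hcos : 0 < cos θ := cos_pos_of_mem_Ioo ⟨by linarith, by linarith⟩
  have hden : 0 < 2 * ξ * sin θ := by positivity
  have hpos : 0 < Ginf := by
    obtain ⟨t, ht, s, hs, h⟩ := hGinf.1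
    rw [← h, hGdef t ht s hs]
    split_ifs with hst
    · refine div_pos (cos_pos_of_mem_Ioo ⟨?_, ?_⟩) hden <;> nlinarith [ht.1, ht.2, hs.1, hs.2]
    · push Not at hst
      refine div_pos (cos_pos_of_mem_Ioo ⟨?_, ?_⟩) hden <;> nlinarith [ht.1, ht.2, hs.1, hs.2]
  have h0 : (0 : ℝ) ∈ Icc 0 ω := ⟨le_rfl, hω.le⟩
  -- the values of `G` at `(0, 0)` and `(ω / 2, 0)` bound `G_*` and `G^*`
  have hinf : Ginf ≤ cos θ / (2 * ξ * sin θ) := by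
    refine hGinf.2 ⟨0, h0, 0, h0, ?_⟩
    rw [hGdef 0 h0 0 h0, if_pos le_rfl, ← cos_neg]
    congr 2; ring
  have hsup : 1 / (2 * ξ * sin θ) ≤ Gsup := by
    have h2 : ω / 2 ∈ Icc 0 ω := ⟨by linarith, by linarith⟩
    refine hGsup.2 ⟨ω / 2, h2, 0, h0, ?_⟩
    rw [hGdef _ h2 0 h0, if_pos (by linarith)]
    simp
  have hsup0 : 0 < Gsup := lt_of_lt_of_le (by positivity) hsup
  refine ⟨hpos, ?_, by rw [hσ]; positivity, ?_⟩
  · have h1 : θ ≤ tan θ := le_tan (by linarith) (by linarith)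
    rw [tan_eq_sin_div_cos, le_div_iff₀ hcos] at h1
    refine (mul_le_mul_of_nonneg_right hinf hω.le).trans ?_
    rw [div_mul_eq_mul_div, div_le_div_iff₀ hden (by positivity)]
    have h3 : ω * ξ = 2 * θ := by rw [hθ]; ring
    calc cos θ * ω * ξ ^ 2 = 2 * ξ * (θ * cos θ) := by linear_combination (cos θ * ξ) * h3
      _ ≤ 2 * ξ * sin θ := by gcongr
      _ = _ := by ring
  · rw [hσ, div_le_iff₀ (by positivity)]
    calc Ginf ≤ cos θ * (1 / (2 * ξ * sin θ)) := by rw [mul_one_div]; exact hinf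
      _ ≤ cos θ * (Gsup + M) := by gcongr; linarith

/-! ### Existence of a positive periodic solution -/

theorem corollary_rho2_gt_rho1
    (ω ρ₁ ρ₂ α ξ : ℝ) (hω : 0 < ω) (hρ : ρ₁ < ρ₂) (hρ₁ : 0 < ρ₁)
    (hα : α = 1 / (ρ₁ + 1))
    (hξ : 0 < ξ) (hξπ : ξ < Real.pi / ω)
    (b c e : ℝ → ℝ)
    (hb : Continuous b) (hbper : Function.Periodic b ω)
    (hc : Continuous c) (hcper : Function.Periodic c ω) (hcpos : ∀ t, 0 < c t)
    (he : Continuous e) (heper : Function.Periodic e ω) (hepos : ∀ t, 0 < e t)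
    (G : ℝ → ℝ → ℝ)
    (hGdef : ∀ t ∈ Set.Icc 0 ω, ∀ s ∈ Set.Icc 0 ω,
      G t s = if s ≤ t then Real.cos (ξ * (t - s - ω / 2)) / (2 * ξ * Real.sin (ξ * ω / 2))
              else Real.cos (ξ * (t - s + ω / 2)) / (2 * ξ * Real.sin (ξ * ω / 2)))
    (Gsup Ginf M σ δ bst cst est : ℝ)
    (hGsup : IsGreatest {x | ∃ t ∈ Set.Icc 0 ω, ∃ s ∈ Set.Icc 0 ω, G t s = x} Gsup)
    (hGinf : IsLeast {x | ∃ t ∈ Set.Icc 0 ω, ∃ s ∈ Set.Icc 0 ω, G t s = x} Ginf)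
    (hM : IsGreatest {x | ∃ t ∈ Set.Icc 0 ω, ∃ s ∈ Set.Icc 0 ω,
      |deriv (fun τ => G τ s) t| = x} M)
    (hσ : σ = Ginf / (Gsup + M)) (hδ : δ = M / Ginf)
    (hbst : IsLeast (b '' Set.Icc 0 ω) bst)
    (hcst : IsLeast (c '' Set.Icc 0 ω) cst)
    (hest : IsLeast (e '' Set.Icc 0 ω) est)
    (hH2 : (1 - α) * (Gsup + δ * Ginf) * δ ^ 2 * ω / σ < 1)
    (r : ℝ) (hr : 0 < r)
    (hH3a : 0 ≤ est * (σ * r) ^ (1 - α) + bst)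
    (hH3b : r ≤ (Ginf * cst * ω / α) ^ (1 / (α + α * ρ₂))) :
    ∃ x : ℝ → ℝ,
      ContDiff ℝ 2 x ∧ Function.Periodic x ω ∧ (∀ t, 0 < x t) ∧
      ∀ t, deriv (deriv x) t + (α * ξ ^ 2) * x t =
        b t / x t ^ ρ₁ + c t / x t ^ ρ₂ + e t := by
  obtain ⟨h0α, hα1⟩ : 0 < α ∧ α < 1 := by
    rw [hα]; exact ⟨by positivity, by rw [div_lt_one (by positivity)]; linarith⟩
  have hρ₂ : 0 < ρ₂ := hρ₁.trans hρ
  have hξω : ξ * ω < π := (lt_div_iff₀ hω).1 hξπ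
  have hξω0 : 0 < ξ * ω := mul_pos hξ hω
  have hM0 : 0 ≤ M := by
    obtain ⟨t, -, s, -, h⟩ := hM.1
    rw [← h]; exact abs_nonneg _
  obtain ⟨hGpos, hGω, hσ0, hσc⟩ := green_bounds hω hξ hξω hGdef hGsup hGinf hM0 hσ
  have hcst0 : 0 < cst := by
    obtain ⟨t, -, h⟩ := hcst.1
    rw [← h]; exact hcpos t
  have hest0 : 0 < est := by
    obtain ⟨t, -, h⟩ := hest.1
    rw [← h]; exact hepos t
  have hmin : ∀ {f : ℝ → ℝ} {m : ℝ}, Function.Periodic f ω → IsLeast (f '' Set.Icc 0 ω) m →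
      ∀ t, m ≤ f t := by
    intro f m hf hm t
    obtain ⟨s, hs, hts⟩ := hf.exists_mem_Ico₀ hω t
    rw [hts]; exact hm.2 ⟨s, Ico_subset_Icc_self hs, rfl⟩
  have hs0 : 0 < √α := sqrt_pos.2 h0α
  have hs1 : √α < 1 := by rw [sqrt_lt' one_pos]; simpa using hα1
  set κ := √α * ξ with hκ
  have hκ0 : 0 < κ := mul_pos hs0 hξ
  have hκ2 : κ ^ 2 = α * ξ ^ 2 := by rw [hκ, mul_pow, sq_sqrt h0α.le]
  have hκω : κ * ω < π := by
    rw [hκ, mul_assoc]; nlinarith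
  set x₀ := (σ * r) ^ α with hx₀
  have hx₀pos : 0 < x₀ := by positivity
  have hx₀ρ : x₀ ^ ρ₁ = (σ * r) ^ (1 - α) := by
    rw [hx₀, ← rpow_mul (by positivity)]
    congr 1
    rw [hα]; field_simp; ring
  have hx₀r : x₀ ≤ r ^ α := by
    have : σ * r ≤ r := mul_le_of_le_one_left hr.le (hσc.trans (cos_le_one _))
    rw [hx₀]; gcongr
  obtain ⟨x, v, h, hhc, hxp, hvp, hh, hxd, hvd⟩ := exists_periodic_truncated hω hκ0 hκω hρ₁ hρ₂
    hx₀pos hb hbper hc hcper he heper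
  have hmax : ∀ t, 0 < max (x t) x₀ := fun t => hx₀pos.trans_le (le_max_right _ _)
  have hhlow : ∀ t, c t / max (x t) x₀ ^ ρ₂ ≤ h t := by
    intro t
    have h1 : x₀ ^ ρ₁ ≤ max (x t) x₀ ^ ρ₁ :=
      rpow_le_rpow hx₀pos.le (le_max_right _ _) hρ₁.le
    have h2 : 0 < max (x t) x₀ ^ ρ₁ := rpow_pos_of_pos (hmax t) _
    have h3 : 0 ≤ e t * max (x t) x₀ ^ ρ₁ + b t := by
      rw [← hx₀ρ] at hH3a
      have := hmin heper hest t
      have := hmin hbper hbst t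
      have := (hepos t).le
      have : est * x₀ ^ ρ₁ ≤ e t * max (x t) x₀ ^ ρ₁ := by gcongr
      linarith
    have h4 : b t / max (x t) x₀ ^ ρ₁ + e t = (e t * max (x t) x₀ ^ ρ₁ + b t) /
        max (x t) x₀ ^ ρ₁ := by field_simp; ring
    have h5 : 0 ≤ b t / max (x t) x₀ ^ ρ₁ + e t := by rw [h4]; positivity
    rw [hh t]; linarith
  have hh0 : ∀ t, 0 ≤ h t := fun t =>
    (div_nonneg (hcpos t).le (rpow_nonneg (hmax t).le _)).trans (hhlow t)
  have hhp : Function.Periodic h ω := by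
    intro t; simp only [hh, hxp t, hbper t, hcper t, heper t]
  -- the periodic solution of the truncated equation reaches the level `r ^ α`
  have hreach : ∃ t, r ^ α ≤ x t := by
    by_contra! hlt
    have hm : ∀ t, cst / (r ^ α) ^ ρ₂ ≤ h t := by
      intro t
      refine le_trans ?_ (hhlow t)
      have h1 : max (x t) x₀ ≤ r ^ α := max_le (hlt t).le hx₀r
      have h2 := hmin hcper hcst t
      have h3 := hmax t
      have h4 := hcpos t
      gcongr
    have h1 := (periodic_lower_bound hω hκ0 hκω hxp hvp hhc hxd hvd hm 0).trans_lt (hlt 0)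
    have hX : 0 < r ^ α := by positivity
    rw [div_div, div_lt_iff₀ (by positivity), hκ2] at h1
    have h2 : r ^ (α + α * ρ₂) ≤ Ginf * cst * ω / α := by
      have h3 := rpow_le_rpow hr.le hH3b (z := α + α * ρ₂) (by positivity)
      rwa [← rpow_mul (by positivity), one_div_mul_cancel (by positivity), rpow_one] at h3
    have h3 : r ^ (α + α * ρ₂) = r ^ α * (r ^ α) ^ ρ₂ := by
      rw [rpow_add hr, rpow_mul hr.le]
    rw [le_div_iff₀ h0α, h3] at h2
    rw [le_div_iff₀ (by positivity)] at hGω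
    have h4 := mul_le_mul_of_nonneg_right h2 (sq_nonneg ξ)
    have h5 := mul_le_mul_of_nonneg_left hGω hcst0.le
    nlinarith
  have hxlow : ∀ t, x₀ ≤ x t := by
    intro t
    obtain ⟨t', ht'⟩ := hreach
    have h1 := periodic_harnack hω hκ0 hκω hxp hvp hhc hxd hvd hh0 hhp t t'
    have hcθ : 0 < cos (ξ * ω / 2) := cos_pos_of_mem_Ioo ⟨by linarith, by linarith⟩
    have h2 := cos_rpow_le_cos_sqrt_mul h0α hα1 (θ := ξ * ω / 2) (by linarith) (by linarith)
    have h3 : √α * (ξ * ω / 2) = κ * ω / 2 := by rw [hκ]; ring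
    rw [h3] at h2
    have h4 : σ ^ α ≤ cos (ξ * ω / 2) ^ α := by gcongr
    calc x₀ = σ ^ α * r ^ α := by rw [hx₀, mul_rpow hσ0.le hr.le]
      _ ≤ cos (κ * ω / 2) * x t' :=
          mul_le_mul (h4.trans h2) ht' (rpow_nonneg hr.le _)
            ((rpow_pos_of_pos hcθ α).le.trans h2)
      _ ≤ x t := h1
  have hdx : deriv x = v := funext fun t => (hxd t).deriv
  have hdv : deriv v = fun t => h t - κ ^ 2 * x t := funext fun t => (hvd t).deriv
  have hxc : Continuous x := continuous_iff_continuousAt.2 fun t => (hxd t).continuousAt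
  refine ⟨x, ?_, hxp, fun t => hx₀pos.trans_le (hxlow t), fun t => ?_⟩
  · have h1 : ContDiff ℝ 1 v := by
      rw [contDiff_one_iff_deriv]
      refine ⟨fun t => (hvd t).differentiableAt, ?_⟩
      rw [hdv]; fun_prop
    have h2 : ContDiff ℝ (1 + 1) x := by
      rw [contDiff_succ_iff_deriv]
      refine ⟨fun t => (hxd t).differentiableAt, by simp, ?_⟩
      rw [hdx]; exact h1
    simpa [one_add_one_eq_two] using h2
  · rw [hdx, hdv, ← hκ2]
    simp only [hh, max_eq_left (hxlow t)]
    ring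
end

section
/- Fix ω > 0 and constants ρ₁ = ρ₂ = ρ > 0; set α = 1/(ρ+1). Let q = αξ² be a positive constant with 0 < ξ < π/ω, let b : ℝ → ℝ be continuous and ω-periodic, and let c, e : ℝ → (0,∞) be continuous ω-periodic functions. Let G be the explicit Green's function G(t,s) = cos(ξ(t−s−ω/2))/(2ξ sin(ξω/2)) for 0 ≤ s ≤ t ≤ ω, G(t,s) = cos(ξ(t−s+ω/2))/(2ξ sin(ξω/2)) for 0 ≤ t < s ≤ ω, and define G*, G_*, M, σ, δ from G. Assume (H₂): (1−α)(G* + δG_*)δ²ω/σ < 1. Assume moreover that either (Case I) b_* + c_* ≥ 0, or (Case II) b_* + c_* < 0 and there exists r > 0 satisfying (H₄): e_*(σr)^{1−α} + (b_* + c_*) > 0 and r ≤ G_* b̄⁺ ω/α, where b⁺(t) = max{0, b(t)} and b̄⁺ = (1/ω)∫₀^ω b⁺(t)dt. Then the equation x'' + q x = b(t)/x^{ρ} + c(t)/x^{ρ} + e(t) has at least one positive ω-periodic solution, i.e. a twice continuously differentiable ω-periodic function x : ℝ → (0,∞) satisfying the equation for all t. -/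
open Real Set

/-!
The substitution `x = u ^ α`, with `α = 1 / (ρ + 1)`, turns the singular equation into
`u'' + ξ² u = F(t, u, u')`, where
`F(t, u, v) = (1 - α) v² / u + (b + c) / α + e u ^ (1 - α) / α` (`rpow_substitution`).

For `0 < ξ < π / ω` the periodic Green's function of `u'' + ξ² u = h` is bounded below by `G_* > 0`,
and its derivative is bounded by `M = δ G_*`. Hence, whenever `h ≥ 0`, the periodic solution satisfies
`G_* ∫ h ≤ u ≤ G^* ∫ h` and `|u'| ≤ δ u`. On the region `m ≤ u ≤ R`, `|v| ≤ δ u` the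
singular term is at most `(1 - α) δ² u`; the smallness hypothesis gives `(1 - α) G^* δ² ω < 1`, and
`u ^ (1 - α)` is sublinear, so for `R` large the upper bound reproduces itself
(`exists_sublinear_bound`). The lower bound reproduces itself when `F ≥ φ` with `m ≤ G_* ∫ φ`: if
`b_* + c_* ≥ 0` the term with `e` provides `φ`, for `m` small; otherwise `m = r` and `φ = b⁺ / α`.
Both components of the Green operator have bounded derivatives, so it preserves a convex set of pairs
`(u, v)` of functions on the circle which is compact by Arzelà–Ascoli, and Schauder's theorem gives
a fixed point (`exists_periodic_solution`).

Schauder's theorem is derived from Brouwer's, and Brouwer's theorem from the absence of a `C¹`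
retraction of the ball onto the sphere, by the Milnor–Rogers argument: for a retraction `r` the
polynomial `t ↦ ∫ det (1 + t (Dr - 1))` equals the volume of the ball for small `t`, hence also at
`t = 1`, where it vanishes (`no_retraction`).
-/

/-! ### The no-retraction theorem -/

/-- `det (1 + t A)` is a polynomial in `t` of degree at most `dim E`, so Lagrange interpolation
recovers its value at `t = 1` from values at nodes in `(0, ε]`, with weights independent of `A`.
This lets the identity `∫ det (1 + t A) = vol`, known for small `t`, be transported to `t = 1`. -/
lemma det_one_add_smul_interp {E : Type*} [NormedAddCommGroup E] [NormedSpace ℝ E]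
    [FiniteDimensional ℝ E] {ε : ℝ} (hε : 0 < ε) :
    ∃ (s : Finset ℕ) (w v : ℕ → ℝ), (∀ j, 0 < v j ∧ v j ≤ ε) ∧ ∑ j ∈ s, w j = 1 ∧
      ∀ A : E →L[ℝ] E, (1 + A).det = ∑ j ∈ s, w j * (1 + v j • A).det := by
  classical
  set n := Module.finrank ℝ E with hn
  let bE := Module.finBasis ℝ E
  let v : ℕ → ℝ := fun j => ε / (j + 1)
  have hv : ∀ s : Finset ℕ, Set.InjOn v s := by
    intro s i _ j _ hij
    have h1 : (i : ℝ) + 1 ≠ 0 := by positivity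
    have h2 : (j : ℝ) + 1 ≠ 0 := by positivity
    simp only [v] at hij
    field_simp at hij
    exact_mod_cast (by linarith : (i : ℝ) = j)
  refine ⟨Finset.range (n + 1), fun j => (Lagrange.basis (Finset.range (n + 1)) v j).eval 1, v,
    ?_, ?_, ?_⟩
  · intro j
    refine ⟨by positivity, div_le_self hε.le ?_⟩
    have : (0 : ℝ) ≤ j := by positivity
    linarith
  · rw [← Polynomial.eval_finsetSum, Lagrange.sum_basis (hv _) ⟨0, by simp⟩, Polynomial.eval_one]
  · intro A
    set B : Matrix (Fin n) (Fin n) ℝ := LinearMap.toMatrix bE bE (A : E →ₗ[ℝ] E) with hB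
    let p : Polynomial ℝ := Matrix.det ((Polynomial.X : Polynomial ℝ) • B.map Polynomial.C
      + (1 : Matrix (Fin n) (Fin n) ℝ).map Polynomial.C)
    have hp : ∀ t : ℝ, p.eval t = (1 + t • A).det := by
      intro t
      have h1 : p.eval t = (1 + t • B).det := by
        rw [← Polynomial.coe_evalRingHom, RingHom.map_det]
        congr 1
        ext i j
        simp only [RingHom.mapMatrix_apply, Matrix.map_apply, Matrix.add_apply, Matrix.smul_apply,
          Polynomial.coe_evalRingHom, Polynomial.eval_add, smul_eq_mul, Polynomial.eval_mul,
          Polynomial.eval_X, Polynomial.eval_C]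
        ring
      rw [h1, ContinuousLinearMap.det, ← LinearMap.det_toMatrix bE]
      congr 1
      have : ((1 + t • A : E →L[ℝ] E) : E →ₗ[ℝ] E) = LinearMap.id + t • (A : E →ₗ[ℝ] E) := by
        ext x; simp
      rw [this, map_add, map_smul, LinearMap.toMatrix_id]
    have hdeg : p.degree < (Finset.range (n + 1)).card := by
      rw [Finset.card_range]
      refine lt_of_le_of_lt Polynomial.degree_le_natDegree ?_
      have := Polynomial.natDegree_det_X_add_C_le B 1
      rw [Fintype.card_fin] at this
      exact_mod_cast Nat.lt_succ_of_le this
    have key := Lagrange.eq_interpolate (hv (Finset.range (n + 1))) hdeg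
    have := congrArg (Polynomial.eval 1) key
    rw [hp, one_smul, Lagrange.interpolate_apply, Polynomial.eval_finsetSum] at this
    rw [this]
    refine Finset.sum_congr rfl fun j _ => ?_
    rw [Polynomial.eval_mul, Polynomial.eval_C, hp, mul_comm]

open Metric MeasureTheory in
/-- There is no `C¹` retraction of the closed unit ball onto the sphere (Milnor–Rogers).
With `g = r - id`, the map `x ↦ x + t g(x)` is for small `t` a diffeomorphism of the open ball onto
itself, so `∫ det (1 + t Dg)` is the volume of the ball; by polynomiality in `t` this persists at
`t = 1`, where the integrand is `det Dr = 0` since `r` takes values in the sphere. -/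
lemma no_retraction {E : Type*} [NormedAddCommGroup E] [InnerProductSpace ℝ E]
    [FiniteDimensional ℝ E] (r : E → E)
    (hr : ∀ x ∈ closedBall (0 : E) 1, ContDiffAt ℝ 1 r x)
    (hr1 : ∀ x ∈ closedBall (0 : E) 1, ‖r x‖ = 1)
    (hrS : ∀ x ∈ sphere (0 : E) 1, r x = x) : False := by
  borelize E
  let g : E → E := fun x => r x - x
  let Dg : E → E →L[ℝ] E := fun x => fderiv ℝ r x - 1
  have hDr : ∀ x ∈ closedBall (0 : E) 1, HasFDerivAt r (fderiv ℝ r x) x := fun x hx =>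
    ((hr x hx).differentiableAt (by simp)).hasFDerivAt
  have hDg : ∀ x ∈ closedBall (0 : E) 1, HasFDerivAt g (Dg x) x := fun x hx =>
    (hDr x hx).sub (hasFDerivAt_id x)
  have hDgc : ContinuousOn Dg (closedBall (0 : E) 1) := by
    intro x hx
    exact (((hr x hx).continuousAt_fderiv (by simp)).sub continuousAt_const).continuousWithinAt
  obtain ⟨C, hC⟩ := (isCompact_closedBall (0 : E) 1).exists_bound_of_continuousOn hDgc
  have hC0 : 0 ≤ C := (norm_nonneg _).trans (hC 0 (by simp))
  have hlip : ∀ x ∈ closedBall (0 : E) 1, ∀ y ∈ closedBall (0 : E) 1,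
      ‖g x - g y‖ ≤ C * ‖x - y‖ := fun x hx y hy =>
    (convex_closedBall (0 : E) 1).norm_image_sub_le_of_norm_hasFDerivWithin_le
      (fun z hz => (hDg z hz).hasFDerivWithinAt) hC hy hx
  obtain ⟨η, hη, hηdet⟩ : ∃ η > 0, ∀ A : E →L[ℝ] E, ‖A‖ < η → 0 < (1 + A).det := by
    have hc : ContinuousAt (fun A : E →L[ℝ] E => (1 + A).det) 0 :=
      (ContinuousLinearMap.continuous_det.comp (continuous_const.add continuous_id)).continuousAt
    have : ∀ᶠ A in nhds (0 : E →L[ℝ] E), 0 < (1 + A).det := by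
      refine hc.eventually (lt_mem_nhds ?_)
      simp [ContinuousLinearMap.det]
    obtain ⟨η, hη, h⟩ := Metric.eventually_nhds_iff.1 this
    exact ⟨η, hη, fun A hA => h (by simpa using hA)⟩
  -- for `t ≤ ε` the perturbation `t • g` is `1/2`-Lipschitz and `det (1 + t Dg)` is positive
  let ε : ℝ := min (1 / 2) (min (η / 2) (1 / 2) / (C + 1))
  have hε : 0 < ε := by positivity
  have hεC : ε * C ≤ min (η / 2) (1 / 2) := by
    have h1 : ε ≤ min (η / 2) (1 / 2) / (C + 1) := min_le_right _ _
    rw [le_div_iff₀ (by positivity)] at h1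
    nlinarith
  have hball : ball (0 : E) 1 ⊆ closedBall 0 1 := ball_subset_closedBall
  have hvol : ∀ t : ℝ, 0 < t → t ≤ ε →
      ∫ x in ball (0 : E) 1, (1 + t • Dg x).det = volume.real (ball (0 : E) 1) := by
    intro t ht htε
    have htC : t * C ≤ min (η / 2) (1 / 2) := le_trans (by gcongr) hεC
    have ht1 : t ≤ 1 / 2 := htε.trans (min_le_left _ _)
    let h : E → E := fun x => x + t • g x
    have hh : ∀ x ∈ closedBall (0 : E) 1, HasFDerivAt h (1 + t • Dg x) x := fun x hx =>
      (hasFDerivAt_id x).add ((hDg x hx).const_smul t)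
    have happ : ApproximatesLinearOn h ((ContinuousLinearEquiv.refl ℝ E : E ≃L[ℝ] E) : E →L[ℝ] E)
        (closedBall (0 : E) 1) (1 / 2) := by
      intro x hx y hy
      have e1 : h x - h y - ((ContinuousLinearEquiv.refl ℝ E : E ≃L[ℝ] E) : E →L[ℝ] E) (x - y)
          = t • (g x - g y) := by
        simp only [h, ContinuousLinearEquiv.coe_refl, ContinuousLinearMap.coe_id', id, smul_sub]
        abel
      rw [e1, norm_smul, Real.norm_of_nonneg ht.le]
      calc t * ‖g x - g y‖ ≤ t * (C * ‖x - y‖) := by gcongr; exact hlip x hx y hy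
        _ = (t * C) * ‖x - y‖ := by ring
        _ ≤ 1 / 2 * ‖x - y‖ := by gcongr; exact htC.trans (min_le_right _ _)
        _ = _ := by norm_num
    have hcon : Subsingleton E ∨ (1 / 2 : NNReal) <
        ‖((ContinuousLinearEquiv.refl ℝ E).symm : E →L[ℝ] E)‖₊⁻¹ := by
      rcases subsingleton_or_nontrivial E with hE | hE
      · exact Or.inl hE
      · right
        have : ((ContinuousLinearEquiv.refl ℝ E).symm : E →L[ℝ] E) = ContinuousLinearMap.id ℝ E := by
          ext; simp
        rw [this, ContinuousLinearMap.nnnorm_id, inv_one, ← NNReal.coe_lt_coe]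
        norm_num
    have hinj : InjOn h (closedBall (0 : E) 1) := happ.injOn hcon
    have hopen : IsOpen (h '' ball (0 : E) 1) :=
      (happ.mono_set hball).open_image (ContinuousLinearEquiv.refl ℝ E).toNonlinearRightInverse
        isOpen_ball hcon
    have hmaps : ∀ x ∈ ball (0 : E) 1, h x ∈ ball (0 : E) 1 := by
      intro x hx
      have hr' := hr1 x (hball hx)
      rw [mem_ball_zero_iff] at hx ⊢
      have e1 : h x = (1 - t) • x + t • r x := by
        simp only [h, g, smul_sub, sub_smul, one_smul]; abel
      rw [e1]
      calc ‖(1 - t) • x + t • r x‖ ≤ ‖(1 - t) • x‖ + ‖t • r x‖ := norm_add_le _ _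
        _ = (1 - t) * ‖x‖ + t := by
          rw [norm_smul, norm_smul, hr', Real.norm_of_nonneg ht.le,
            Real.norm_of_nonneg (by linarith), mul_one]
        _ < 1 := by nlinarith
    have hcont : ContinuousOn h (closedBall (0 : E) 1) := fun x hx =>
      (hh x hx).continuousAt.continuousWithinAt
    have hcl : IsClosed (h '' closedBall (0 : E) 1) :=
      ((isCompact_closedBall (0 : E) 1).image_of_continuousOn hcont).isClosed
    -- the image is open, and closed relative to the ball as `h` fixes the sphere pointwise
    have himg : h '' ball (0 : E) 1 = ball (0 : E) 1 := by
      refine Subset.antisymm (image_subset_iff.2 hmaps) ?_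
      refine IsPreconnected.subset_left_of_subset_union hopen hcl.isOpen_compl ?_ ?_ ?_
        (convex_ball (0 : E) 1).isPreconnected
      · exact disjoint_compl_right_iff_subset.2 (image_mono hball)
      · intro y hy
        by_cases hy' : y ∈ h '' closedBall (0 : E) 1
        · left
          obtain ⟨x, hx, rfl⟩ := hy'
          rcases eq_or_lt_of_le (mem_closedBall_zero_iff.1 hx) with h1 | h1
          · have : h x = x := by simp [h, g, hrS x (by simpa using h1)]
            rw [this, mem_ball_zero_iff] at hy
            linarith
          · exact ⟨x, by simpa using h1, rfl⟩
        · exact Or.inr hy'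
      · exact ⟨h 0, hmaps 0 (by simp), mem_image_of_mem _ (by simp)⟩
    have hcv := integral_image_eq_integral_abs_det_fderiv_smul (volume : Measure E)
      (measurableSet_ball (x := (0 : E)) (ε := 1))
      (fun x hx => (hh x (hball hx)).hasFDerivWithinAt) (hinj.mono hball) (fun _ => (1 : ℝ))
    rw [himg] at hcv
    have : ∫ x in ball (0 : E) 1, (1 : ℝ) = volume.real (ball (0 : E) 1) := by simp
    rw [← this, hcv]
    refine setIntegral_congr_fun measurableSet_ball fun x hx => ?_
    have hpos : 0 < (1 + t • Dg x).det := by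
      apply hηdet
      rw [norm_smul, Real.norm_of_nonneg ht.le]
      calc t * ‖Dg x‖ ≤ t * C := by gcongr; exact hC x (hball hx)
        _ ≤ η / 2 := htC.trans (min_le_left _ _)
        _ < η := by linarith
    simp [abs_of_pos hpos]
  obtain ⟨s, w, v, hv, hw, hdet⟩ := det_one_add_smul_interp (E := E) hε
  have hint : ∀ t : ℝ, IntegrableOn (fun x => (1 + t • Dg x).det) (ball (0 : E) 1) := by
    intro t
    refine IntegrableOn.mono_set (t := closedBall (0 : E) 1) ?_ hball
    refine ContinuousOn.integrableOn_compact (isCompact_closedBall _ _) ?_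
    exact ContinuousLinearMap.continuous_det.comp_continuousOn
      (continuousOn_const.add (hDgc.const_smul t))
  have hone : ∫ x in ball (0 : E) 1, (1 + Dg x).det = volume.real (ball (0 : E) 1) := by
    rw [show (fun x => (1 + Dg x).det) = fun x => ∑ j ∈ s, w j * (1 + v j • Dg x).det from
      funext fun x => hdet (Dg x), integral_finsetSum _ fun j _ => (hint (v j)).const_mul (w j)]
    simp_rw [integral_const_mul]
    rw [Finset.sum_congr rfl fun j _ => by rw [hvol (v j) (hv j).1 (hv j).2], ← Finset.sum_mul, hw,
      one_mul]
  have hzero : ∀ x ∈ ball (0 : E) 1, (1 + Dg x).det = 0 := by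
    intro x hx
    have hD : 1 + Dg x = fderiv ℝ r x := add_sub_cancel 1 (fderiv ℝ r x)
    rw [hD]
    -- differentiating `‖r‖² = 1` shows that the range of `Dr` is orthogonal to `r x`
    have horth : ∀ u, inner ℝ (r x) (fderiv ℝ r x u) = 0 := by
      intro u
      have h1 := (hDr x (hball hx)).norm_sq
      have h2 : (fun y => ‖r y‖ ^ 2) =ᶠ[nhds x] fun _ => (1 : ℝ) := by
        filter_upwards [isOpen_ball.mem_nhds hx] with y hy
        rw [hr1 y (hball hy), one_pow]
      have h3 := h1.unique ((hasFDerivAt_const (1 : ℝ) x).congr_of_eventuallyEq h2)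
      have h4 := congrArg (fun L : E →L[ℝ] ℝ => L u) h3
      simpa using h4
    by_contra hne
    have hsurj : Function.Surjective ((fderiv ℝ r x : E →L[ℝ] E) : E →ₗ[ℝ] E) := by
      have := LinearMap.isUnit_iff_isUnit_det ((fderiv ℝ r x : E →L[ℝ] E) : E →ₗ[ℝ] E)
      have hu := this.2 (isUnit_iff_ne_zero.2 hne)
      exact ((Module.End.isUnit_iff _).1 hu).2
    obtain ⟨u, hu⟩ := hsurj (r x)
    have h5 := horth u
    rw [show fderiv ℝ r x u = r x from hu, real_inner_self_eq_norm_sq, hr1 x (hball hx)] at h5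
    norm_num at h5
  rw [setIntegral_congr_fun measurableSet_ball (g := fun _ => (0 : ℝ)) hzero, integral_zero] at hone
  have : 0 < volume.real (ball (0 : E) 1) :=
    ENNReal.toReal_pos (measure_ball_pos _ _ one_pos).ne' measure_ball_lt_top.ne
  linarith

/-! ### The fixed point theorems of Brouwer and Schauder -/

open Metric in
/-- Brouwer's theorem for `C¹` maps into the open ball. Without a fixed point, sending `x` to the
point where the ray from `g x` through `x` leaves the ball would be a `C¹` retraction. -/
lemma brouwer_smooth {E : Type*} [NormedAddCommGroup E] [InnerProductSpace ℝ E]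
    [FiniteDimensional ℝ E] (g : E → E) (hg : ContDiff ℝ 1 g) (hg1 : ∀ x, ‖g x‖ < 1) :
    ∃ x ∈ closedBall (0 : E) 1, g x = x := by
  by_contra! hne
  -- `s x` is the larger root of `‖x + s • u‖² = 1`, that is of `a s² + 2 b s + ‖x‖² - 1 = 0`,
  -- and `d` is a quarter of the discriminant
  let u : E → E := fun x => x - g x
  let a : E → ℝ := fun x => inner ℝ (u x) (u x)
  let b : E → ℝ := fun x => inner ℝ x (u x)
  let d : E → ℝ := fun x => b x ^ 2 + a x * (1 - inner ℝ x x)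
  let s : E → ℝ := fun x => (-b x + √(d x)) / a x
  have hu : ContDiff ℝ 1 u := contDiff_id.sub hg
  have ha : ContDiff ℝ 1 a := hu.inner ℝ hu
  have hb : ContDiff ℝ 1 b := contDiff_id.inner ℝ hu
  have hd : ContDiff ℝ 1 d :=
    (hb.pow 2).add (ha.mul (contDiff_const.sub (contDiff_id.inner ℝ contDiff_id)))
  have ha0 : ∀ x ∈ closedBall (0 : E) 1, 0 < a x := fun x hx =>
    real_inner_self_pos.2 (sub_ne_zero.2 (hne x hx).symm)
  have hbS : ∀ x, ‖x‖ = 1 → 0 < b x := by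
    intro x hx
    have h1 : b x = ‖x‖ ^ 2 - inner ℝ x (g x) := by
      simp only [b, u, inner_sub_right, real_inner_self_eq_norm_sq]
    have h2 := real_inner_le_norm x (g x)
    rw [hx] at h1 h2
    have := hg1 x
    rw [h1]; linarith
  have hd0 : ∀ x ∈ closedBall (0 : E) 1, 0 < d x := by
    intro x hx
    have h1 := ha0 x hx
    rw [mem_closedBall_zero_iff] at hx
    have h2 : inner ℝ x x = ‖x‖ ^ 2 := real_inner_self_eq_norm_sq x
    rcases eq_or_lt_of_le hx with h | h
    · have := hbS x h
      simp only [d, h2, h]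
      norm_num
      positivity
    · have : 0 < 1 - inner ℝ x x := by rw [h2]; nlinarith [norm_nonneg x]
      simp only [d]
      positivity
  refine no_retraction (fun x => x + s x • u x) ?_ ?_ ?_
  · intro x hx
    have hs : ContDiffAt ℝ 1 s x :=
      ((hb.contDiffAt.neg).add (hd.contDiffAt.sqrt (hd0 x hx).ne')).div ha.contDiffAt (ha0 x hx).ne'
    exact contDiffAt_id.add (hs.smul hu.contDiffAt)
  · intro x hx
    have hs : a x * s x + b x = √(d x) := by
      have := (ha0 x hx).ne'
      simp only [s]
      field_simp
      ring
    have hsq : (a x * s x + b x) ^ 2 = d x := by rw [hs, Real.sq_sqrt (hd0 x hx).le]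
    have hnorm : ‖x + s x • u x‖ ^ 2 = inner ℝ x x + 2 * s x * b x + s x ^ 2 * a x := by
      rw [← real_inner_self_eq_norm_sq]
      simp only [inner_add_left, inner_add_right, real_inner_smul_left, real_inner_smul_right, a, b,
        real_inner_comm x (u x)]
      ring
    have : a x * (‖x + s x • u x‖ ^ 2 - 1) = 0 := by
      rw [hnorm]
      simp only [d] at hsq
      linarith
    rcases mul_eq_zero.1 this with h | h
    · exact absurd h (ha0 x hx).ne'
    · exact (pow_eq_one_iff_of_nonneg (norm_nonneg _) two_ne_zero).1 (sub_eq_zero.1 h)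
  · intro x hx
    rw [mem_sphere_zero_iff_norm] at hx
    have h1 : d x = b x ^ 2 := by simp [d, hx]
    have h2 : s x = 0 := by simp [s, h1, Real.sqrt_sq (hbS x hx).le]
    simp [h2]

open Metric in
/-- Brouwer's theorem for a continuous self-map of a Euclidean space with values in the closed
unit ball, by smooth approximation. -/
lemma brouwer_ball {E : Type*} [NormedAddCommGroup E] [InnerProductSpace ℝ E]
    [FiniteDimensional ℝ E] (f : E → E) (hf : Continuous f) (hf1 : ∀ x, ‖f x‖ ≤ 1) :
    ∃ x, f x = x := by
  by_contra! hne
  obtain ⟨x₀, hx₀, hmin⟩ := (isCompact_closedBall (0 : E) 1).exists_isMinOn ⟨0, by simp⟩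
    ((hf.sub continuous_id).norm.continuousOn)
  set δ := ‖f x₀ - x₀‖ with hδ
  have hδ0 : 0 < δ := norm_pos_iff.2 (sub_ne_zero.2 (hne x₀))
  obtain ⟨g, hg, hgf, -⟩ := hf.exists_contDiff_approx (ε := fun _ => δ / 4) 1 continuous_const
    (fun _ => by positivity)
  have hg1 : ∀ x, ‖g x‖ < 1 + δ / 4 := by
    intro x
    have h1 := hgf x
    rw [dist_eq_norm] at h1
    have h2 := norm_add_le (g x - f x) (f x)
    rw [sub_add_cancel] at h2
    linarith [hf1 x]
  obtain ⟨x, hx, hfix⟩ := brouwer_smooth (fun x => (1 + δ / 4)⁻¹ • g x) (contDiff_const.smul hg)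
    (fun x => by
      rw [norm_smul, norm_inv, Real.norm_of_nonneg (by positivity), inv_mul_lt_iff₀ (by positivity),
        mul_one]
      exact hg1 x)
  have h1 : g x = (1 + δ / 4) • x := by
    nth_rewrite 2 [← hfix]
    rw [smul_smul, mul_inv_cancel₀ (by positivity), one_smul]
  have h2 : δ ≤ ‖f x - x‖ := hmin hx
  have h3 := hgf x
  rw [dist_comm, dist_eq_norm] at h3
  have h4 : f x - x = (f x - g x) + (δ / 4) • x := by
    rw [h1, add_smul, one_smul]; abel
  have h5 := norm_add_le (f x - g x) ((δ / 4) • x)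
  rw [← h4, norm_smul, Real.norm_of_nonneg (by positivity)] at h5
  rw [mem_closedBall_zero_iff] at hx
  nlinarith

/-- Brouwer's theorem on the standard simplex, obtained from the ball by composing with a
continuous retraction `ρ` of the whole space onto the simplex. -/
lemma brouwer_stdSimplex {ι : Type*} [Fintype ι] [Nonempty ι] (φ : (ι → ℝ) → ι → ℝ)
    (hφ : ContinuousOn φ (stdSimplex ℝ ι)) (hm : MapsTo φ (stdSimplex ℝ ι) (stdSimplex ℝ ι)) :
    ∃ z ∈ stdSimplex ℝ ι, φ z = z := by
  -- `ρ` truncates negative coordinates, spreads a deficit of total mass evenly over all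
  -- coordinates, and rescales an excess
  let S : (ι → ℝ) → ℝ := fun z => ∑ i, max (z i) 0
  let ρ : (ι → ℝ) → ι → ℝ := fun z i =>
    (max (z i) 0 + max (1 - S z) 0 / Fintype.card ι) / max (S z) 1
  have hcard : (Fintype.card ι : ℝ) ≠ 0 := by simp
  have hS : Continuous S := by fun_prop
  have hρc : Continuous ρ := by
    refine continuous_pi fun i => Continuous.div (by fun_prop) (by fun_prop) fun z => ?_
    exact (lt_of_lt_of_le one_pos (le_max_right _ _)).ne'
  have hρm : ∀ z, ρ z ∈ stdSimplex ℝ ι := by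
    intro z
    have hpos : 0 < max (S z) 1 := lt_of_lt_of_le one_pos (le_max_right _ _)
    refine ⟨fun i => by positivity, ?_⟩
    simp only [ρ]
    rw [← Finset.sum_div, Finset.sum_add_distrib, div_eq_one_iff_eq hpos.ne', Finset.sum_const,
      Finset.card_univ, nsmul_eq_mul, mul_div_cancel₀ _ hcard]
    change S z + _ = _
    rcases le_total (S z) 1 with h | h
    · rw [max_eq_left (by linarith), max_eq_right h]; ring
    · rw [max_eq_right (by linarith), max_eq_left h]; ring
  have hρid : ∀ z ∈ stdSimplex ℝ ι, ρ z = z := by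
    intro z hz
    have h1 : ∀ i, max (z i) 0 = z i := fun i => max_eq_left (hz.1 i)
    have h2 : S z = 1 := by simp only [S, h1]; exact hz.2
    ext i
    simp [ρ, h1, h2]
  let f : EuclideanSpace ℝ ι → EuclideanSpace ℝ ι := fun x => WithLp.toLp 2 (φ (ρ x.ofLp))
  have hf : Continuous f := by
    refine (PiLp.continuous_toLp 2 _).comp ?_
    exact hφ.comp_continuous (hρc.comp (PiLp.continuous_ofLp 2 _)) fun x => hρm _
  have hf1 : ∀ x, ‖f x‖ ≤ 1 := by
    intro x
    have hx := hm (hρm x.ofLp)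
    rw [EuclideanSpace.norm_eq, Real.sqrt_le_one]
    calc ∑ i, ‖f x i‖ ^ 2 ≤ ∑ i, φ (ρ x.ofLp) i := by
          refine Finset.sum_le_sum fun i _ => ?_
          have h0 := hx.1 i
          have h1 : φ (ρ x.ofLp) i ≤ 1 := by
            rw [← hx.2]
            exact Finset.single_le_sum (fun j _ => hx.1 j) (Finset.mem_univ i)
          change ‖φ (ρ x.ofLp) i‖ ^ 2 ≤ _
          rw [Real.norm_of_nonneg h0]
          nlinarith
      _ = 1 := hx.2
  obtain ⟨x, hx⟩ := brouwer_ball f hf hf1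
  have h1 : φ (ρ x.ofLp) = x.ofLp := congrArg WithLp.ofLp hx
  have h2 : x.ofLp ∈ stdSimplex ℝ ι := h1 ▸ hm (hρm _)
  exact ⟨x.ofLp, h2, by rwa [hρid _ h2] at h1⟩

open Metric in
/-- Schauder's fixed point theorem on a compact convex subset of a normed space. Approximate fixed
points come from Brouwer's theorem on the simplex spanned by a finite `ε`-net, through the
Schauder projection; compactness turns them into a fixed point. -/
theorem schauder {V : Type*} [NormedAddCommGroup V] [NormedSpace ℝ V] {K : Set V}
    (hK : IsCompact K) (hKc : Convex ℝ K) (hKn : K.Nonempty) (T : V → V)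
    (hT : ContinuousOn T K) (hm : MapsTo T K K) : ∃ x ∈ K, T x = x := by
  classical
  have happrox : ∀ ε > 0, ∃ x ∈ K, ‖T x - x‖ ≤ ε := by
    intro ε hε
    obtain ⟨t, htK, htf, hcov⟩ := hK.finite_cover_balls hε
    have : Fintype t := htf.fintype
    let w : V → t → ℝ := fun p i => max (ε - ‖p - i‖) 0
    have hw : Continuous w := by fun_prop
    have hwpos : ∀ p ∈ K, 0 < ∑ i, w p i := by
      intro p hp
      obtain ⟨y, hy, hpy⟩ := mem_iUnion₂.1 (hcov hp)
      refine Finset.sum_pos' (fun i _ => le_max_right _ _) ⟨⟨y, hy⟩, Finset.mem_univ _, ?_⟩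
      rw [mem_ball, dist_eq_norm] at hpy
      exact lt_max_of_lt_left (by simpa using hpy)
    let W : V → t → ℝ := fun p i => w p i / ∑ j, w p j
    have hW : ContinuousOn W K := by
      refine continuousOn_pi.2 fun i => ContinuousOn.div (by fun_prop) (by fun_prop) fun p hp => ?_
      exact (hwpos p hp).ne'
    have hWm : ∀ p ∈ K, W p ∈ stdSimplex ℝ t := by
      intro p hp
      refine ⟨fun i => div_nonneg (le_max_right _ _) (hwpos p hp).le, ?_⟩
      simp only [W]
      rw [← Finset.sum_div, div_self (hwpos p hp).ne']
    let P : (t → ℝ) → V := fun z => ∑ i, z i • (i : V)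
    have hP : Continuous P := by fun_prop
    have hPm : MapsTo P (stdSimplex ℝ t) K := fun z hz =>
      hKc.sum_mem (fun i _ => hz.1 i) hz.2 fun i _ => htK i.2
    have : Nonempty t := by
      obtain ⟨p, hp⟩ := hKn
      obtain ⟨y, hy, -⟩ := mem_iUnion₂.1 (hcov hp)
      exact ⟨⟨y, hy⟩⟩
    obtain ⟨z, hz, hfix⟩ := brouwer_stdSimplex (fun z => W (T (P z)))
      (hW.comp (hT.comp hP.continuousOn hPm) (hm.comp hPm)) (fun z hz => hWm _ (hm (hPm hz)))
    refine ⟨P z, hPm hz, ?_⟩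
    have e1 : T (P z) - P z = ∑ i, z i • (T (P z) - i) := by
      simp only [smul_sub, Finset.sum_sub_distrib, ← Finset.sum_smul]
      rw [hz.2, one_smul]
    rw [e1]
    calc ‖∑ i, z i • (T (P z) - i)‖ ≤ ∑ i, ‖z i • (T (P z) - i)‖ := norm_sum_le _ _
      _ ≤ ∑ i, z i * ε := by
        refine Finset.sum_le_sum fun i _ => ?_
        rw [norm_smul, Real.norm_of_nonneg (hz.1 i)]
        rcases le_total ‖T (P z) - i‖ ε with h | h
        · exact mul_le_mul_of_nonneg_left h (hz.1 i)
        · have : z i = 0 := by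
            rw [← hfix]
            simp only [W, w]
            rw [max_eq_right (by linarith), zero_div]
          simp [this]
      _ = ε := by rw [← Finset.sum_mul, hz.2, one_mul]
  obtain ⟨x, hx, hmin⟩ := hK.exists_isMinOn hKn (hT.sub continuousOn_id).norm
  refine ⟨x, hx, ?_⟩
  have : ‖T x - x‖ ≤ 0 := by
    refine le_of_forall_pos_le_add fun ε hε => ?_
    obtain ⟨y, hy, hyε⟩ := happrox ε hε
    rw [zero_add]
    exact (hmin hy).trans hyε
  exact sub_eq_zero.1 (norm_le_zero_iff.1 this)

/-! ### The periodic Green operator -/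

/-- The periodic Green's function of `u'' + ξ² u = h` as a function of `τ = s - t ∈ [0, ω]`:
the periodic solution is `u(t) = ∫₀^ω greenKer ω ξ τ * h (t + τ) dτ`. -/
noncomputable def greenKer (ω ξ τ : ℝ) : ℝ := cos (ξ * (ω / 2 - τ)) / (2 * ξ * sin (ξ * ω / 2))

/-- The kernel of the derivative of the periodic solution:
`u'(t) = ∫₀^ω greenKer' ω ξ τ * h (t + τ) dτ`. It is minus the derivative of `greenKer ω ξ`. -/
noncomputable def greenKer' (ω ξ τ : ℝ) : ℝ := sin (ξ * (τ - ω / 2)) / (2 * sin (ξ * ω / 2))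

lemma continuous_greenKer (ω ξ : ℝ) : Continuous (greenKer ω ξ) := by
  unfold greenKer; fun_prop

lemma continuous_greenKer' (ω ξ : ℝ) : Continuous (greenKer' ω ξ) := by
  unfold greenKer'; fun_prop

/-- The Green operator solves the linear periodic problem: `u = ∫ greenKer · h` satisfies
`u' = ∫ greenKer' · h` and `u'' = h - ξ² u`. Addition formulas express both integrals through the
primitives of `cos (ξ s) h(s)` and `sin (ξ s) h(s)`, which makes the differentiation elementary even
though `h` is merely continuous. -/
lemma hasDerivAt_green {ω ξ : ℝ} (hξ : ξ ≠ 0) (hsin : sin (ξ * ω / 2) ≠ 0) {h : ℝ → ℝ}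
    (hh : Continuous h) (hper : Function.Periodic h ω) (t : ℝ) :
    HasDerivAt (fun t => ∫ τ in (0:ℝ)..ω, greenKer ω ξ τ * h (t + τ))
      (∫ τ in (0:ℝ)..ω, greenKer' ω ξ τ * h (t + τ)) t ∧
    HasDerivAt (fun t => ∫ τ in (0:ℝ)..ω, greenKer' ω ξ τ * h (t + τ))
      (h t - ξ ^ 2 * ∫ τ in (0:ℝ)..ω, greenKer ω ξ τ * h (t + τ)) t := by
  let C : ℝ → ℝ := fun x => ∫ s in (0:ℝ)..x, cos (ξ * s) * h s
  let S : ℝ → ℝ := fun x => ∫ s in (0:ℝ)..x, sin (ξ * s) * h s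
  have hcc : Continuous fun s => cos (ξ * s) * h s := by fun_prop
  have hsc : Continuous fun s => sin (ξ * s) * h s := by fun_prop
  have hC : ∀ x, HasDerivAt C (cos (ξ * x) * h x) x := fun x =>
    (hcc.integral_hasStrictDerivAt 0 x).hasDerivAt
  have hS : ∀ x, HasDerivAt S (sin (ξ * x) * h x) x := fun x =>
    (hsc.integral_hasStrictDerivAt 0 x).hasDerivAt
  have hCd : ∀ t, ∫ s in t..(t + ω), cos (ξ * s) * h s = C (t + ω) - C t := fun t =>
    (intervalIntegral.integral_interval_sub_left (hcc.intervalIntegrable _ _)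
      (hcc.intervalIntegrable _ _)).symm
  have hSd : ∀ t, ∫ s in t..(t + ω), sin (ξ * s) * h s = S (t + ω) - S t := fun t =>
    (intervalIntegral.integral_interval_sub_left (hsc.intervalIntegrable _ _)
      (hsc.intervalIntegrable _ _)).symm
  have shift : ∀ (f : ℝ → ℝ) (t : ℝ), ∫ τ in (0:ℝ)..ω, f τ * h (t + τ)
      = ∫ s in t..(t + ω), f (s - t) * h s := by
    intro f t
    have := intervalIntegral.integral_comp_add_left (a := 0) (b := ω) (fun s => f (s - t) * h s) t
    simpa using this
  have hu : ∀ t, ∫ τ in (0:ℝ)..ω, greenKer ω ξ τ * h (t + τ)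
      = (cos (ξ * (t + ω / 2)) * (C (t + ω) - C t) + sin (ξ * (t + ω / 2)) * (S (t + ω) - S t))
        / (2 * ξ * sin (ξ * ω / 2)) := by
    intro t
    rw [shift, ← hCd, ← hSd, ← intervalIntegral.integral_const_mul,
      ← intervalIntegral.integral_const_mul, ← intervalIntegral.integral_add
        ((hcc.const_mul _).intervalIntegrable _ _) ((hsc.const_mul _).intervalIntegrable _ _),
      ← intervalIntegral.integral_div]
    refine intervalIntegral.integral_congr fun s _ => ?_
    simp only [greenKer]
    rw [show ξ * (ω / 2 - (s - t)) = ξ * (t + ω / 2) - ξ * s by ring, cos_sub]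
    ring
  have hv : ∀ t, ∫ τ in (0:ℝ)..ω, greenKer' ω ξ τ * h (t + τ)
      = (cos (ξ * (t + ω / 2)) * (S (t + ω) - S t) - sin (ξ * (t + ω / 2)) * (C (t + ω) - C t))
        / (2 * sin (ξ * ω / 2)) := by
    intro t
    rw [shift, ← hCd, ← hSd, ← intervalIntegral.integral_const_mul,
      ← intervalIntegral.integral_const_mul, ← intervalIntegral.integral_sub
        ((hsc.const_mul _).intervalIntegrable _ _) ((hcc.const_mul _).intervalIntegrable _ _),
      ← intervalIntegral.integral_div]
    refine intervalIntegral.integral_congr fun s _ => ?_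
    simp only [greenKer']
    rw [show ξ * (s - t - ω / 2) = ξ * s - ξ * (t + ω / 2) by ring, sin_sub]
    ring
  have hCt : HasDerivAt (fun x => C (x + ω) - C x)
      (cos (ξ * (t + ω)) * h (t + ω) - cos (ξ * t) * h t) t :=
    ((hC (t + ω)).comp_add_const t ω).sub (hC t)
  have hSt : HasDerivAt (fun x => S (x + ω) - S x)
      (sin (ξ * (t + ω)) * h (t + ω) - sin (ξ * t) * h t) t :=
    ((hS (t + ω)).comp_add_const t ω).sub (hS t)
  have ha : HasDerivAt (fun t => ξ * (t + ω / 2)) ξ t := by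
    simpa using ((hasDerivAt_id t).add_const (ω / 2)).const_mul ξ
  have e1 : ξ * (t + ω) = ξ * (t + ω / 2) + ξ * ω / 2 := by ring
  have e2 : ξ * t = ξ * (t + ω / 2) - ξ * ω / 2 := by ring
  have e3 := sin_sq_add_cos_sq (ξ * (t + ω / 2))
  simp only [hu, hv]
  constructor
  · convert! ((ha.cos.mul hCt).add (ha.sin.mul hSt)).div_const (2 * ξ * sin (ξ * ω / 2)) using 1
    rw [hper t, e1, e2, cos_add, cos_sub, sin_add, sin_sub]
    generalize sin (ξ * (t + ω / 2)) = p at *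
    generalize cos (ξ * (t + ω / 2)) = q at *
    generalize sin (ξ * ω / 2) = z at *
    field_simp
    ring
  · convert! ((ha.cos.mul hSt).sub (ha.sin.mul hCt)).div_const (2 * sin (ξ * ω / 2)) using 1
    rw [hper t, e1, e2, cos_add, cos_sub, sin_add, sin_sub]
    generalize sin (ξ * (t + ω / 2)) = p at *
    generalize cos (ξ * (t + ω / 2)) = q at *
    generalize sin (ξ * ω / 2) = z at *
    field_simp
    linear_combination (-2 * h t * z) * e3

/-- Arzelà–Ascoli for uniformly bounded, uniformly Lipschitz functions. -/
lemma isCompact_lipschitz {X : Type*} [PseudoMetricSpace X] (a b L : ℝ) :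
    IsCompact {f : C(X, ℝ) | (∀ x, f x ∈ Icc a b) ∧ ∀ x y, |f x - f y| ≤ L * dist x y} := by
  apply ArzelaAscoli.isCompact_of_equicontinuous
  · have himg : ContinuousMap.toFun '' {f : C(X, ℝ) | (∀ x, f x ∈ Icc a b) ∧
        ∀ x y, |f x - f y| ≤ L * dist x y} =
        {f : X → ℝ | (∀ x, f x ∈ Icc a b) ∧ ∀ x y, |f x - f y| ≤ L * dist x y} := by
      ext f
      constructor
      · rintro ⟨g, hg, rfl⟩; exact hg
      · intro hf
        have : LipschitzWith L.toNNReal f := LipschitzWith.of_dist_le_mul fun x y => by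
          rw [Real.dist_eq]
          refine (hf.2 x y).trans ?_
          gcongr
          exact Real.le_coe_toNNReal L
        exact ⟨⟨f, this.continuous⟩, hf, rfl⟩
    rw [himg]
    refine (isCompact_univ_pi fun _ : X => isCompact_Icc (a := a) (b := b)).of_isClosed_subset ?_
      fun f hf x _ => hf.1 x
    have : {f : X → ℝ | (∀ x, f x ∈ Icc a b) ∧ ∀ x y, |f x - f y| ≤ L * dist x y} =
        (⋂ x, {f : X → ℝ | f x ∈ Icc a b}) ∩
          ⋂ x, ⋂ y, {f : X → ℝ | |f x - f y| ≤ L * dist x y} := by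
      ext f; simp
    rw [this]
    refine (isClosed_iInter fun x => ?_).inter (isClosed_iInter fun x => isClosed_iInter fun y => ?_)
    · exact isClosed_Icc.preimage (continuous_apply x)
    · exact isClosed_le (by fun_prop) continuous_const
  · refine UniformEquicontinuous.equicontinuous ?_
    refine LipschitzWith.uniformEquicontinuous _ L.toNNReal fun f => ?_
    refine LipschitzWith.of_dist_le_mul fun x y => ?_
    rw [Real.dist_eq]
    refine (f.2.2 x y).trans ?_
    gcongr
    exact Real.le_coe_toNNReal L

/-- A function on the circle whose lift to `ℝ` is `L`-Lipschitz is `L`-Lipschitz for the arc-length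
metric: two points of the circle have lifts at distance equal to their distance. -/
lemma AddCircle.lipschitz_of_lift {ω : ℝ} (f : AddCircle ω → ℝ) {L : ℝ}
    (hf : ∀ s t : ℝ, |f (s : AddCircle ω) - f (t : AddCircle ω)| ≤ L * |s - t|)
    (x y : AddCircle ω) : |f x - f y| ≤ L * dist x y := by
  obtain ⟨s, rfl⟩ := QuotientAddGroup.mk_surjective x
  obtain ⟨t, rfl⟩ := QuotientAddGroup.mk_surjective y
  have h1 := AddCircle.norm_eq (p := ω) (x := s - t)
  set n := round (ω⁻¹ * (s - t))
  have h2 := hf s (t + n * ω)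
  have h3 : ((t + n * ω : ℝ) : AddCircle ω) = (t : AddCircle ω) := by
    rw [AddCircle.coe_add, (AddCircle.coe_eq_zero_iff ω (x := n * ω)).2 ⟨n, by simp⟩, add_zero]
  rw [h3] at h2
  rw [dist_eq_norm]
  change _ ≤ L * ‖((s : AddCircle ω)) - (t : AddCircle ω)‖
  rw [← AddCircle.coe_sub, h1, sub_sub]
  exact h2

lemma abs_sub_le_of_hasDerivAt {f f' : ℝ → ℝ} {L : ℝ} (hf : ∀ t, HasDerivAt f (f' t) t)
    (hL : ∀ t, |f' t| ≤ L) (s t : ℝ) : |f s - f t| ≤ L * |s - t| :=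
  convex_univ.norm_image_sub_le_of_norm_hasDerivWithin_le
    (fun x _ => (hf x).hasDerivWithinAt) (fun x _ => hL x) (mem_univ t) (mem_univ s)

/-! ### Periodic solutions in an invariant region -/

/-- Periodic solvability of `u'' + ξ² u = F(t, u, u')` when `F` is controlled only on the region
`m ≤ u ≤ R`, `|u'| ≤ δ u`. If there `φ ≤ F` and `0 ≤ F ≤ H`, the Green operator maps the pairs
`(u, v)` in that region into it again: the kernel bounds `Gi ≤ G ≤ Gs` and `|∂G| ≤ M ≤ δ Gi`
give `m ≤ Gi ∫ φ ≤ u ≤ Gs ω H ≤ R` and `|v| ≤ M ∫ F ≤ δ Gi ∫ F ≤ δ u`. -/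
theorem exists_periodic_solution_s12 {ω ξ : ℝ} (hω : 0 < ω) (hξ : ξ ≠ 0) (hsin : sin (ξ * ω / 2) ≠ 0)
    {F : AddCircle ω → ℝ → ℝ → ℝ}
    (hF : Continuous fun p : AddCircle ω × ℝ × ℝ => F p.1 p.2.1 p.2.2)
    {m R δ Gi Gs M H : ℝ} (hm : 0 < m) (hmR : m ≤ R) (hδ : 0 ≤ δ) (hGi : 0 ≤ Gi)
    (hker : ∀ τ ∈ Icc 0 ω, Gi ≤ greenKer ω ξ τ ∧ greenKer ω ξ τ ≤ Gs)
    (hker' : ∀ τ ∈ Ioo 0 ω, |greenKer' ω ξ τ| ≤ M) (hM : M ≤ δ * Gi)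
    (hF0 : ∀ x u v, m ≤ u → u ≤ R → |v| ≤ δ * u → 0 ≤ F x u v ∧ F x u v ≤ H)
    (hH : Gs * (ω * H) ≤ R) {φ : ℝ → ℝ} (hφ : Continuous φ)
    (hφF : ∀ (t : ℝ) (u v : ℝ), m ≤ u → u ≤ R → |v| ≤ δ * u → φ t ≤ F t u v)
    (hφm : m ≤ Gi * ∫ t in (0:ℝ)..ω, φ t) :
    ∃ u v : ℝ → ℝ, Function.Periodic u ω ∧ Function.Periodic v ω ∧
      (∀ t, m ≤ u t ∧ |v t| ≤ δ * u t) ∧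
      ∀ t : ℝ, HasDerivAt u (v t) t ∧ HasDerivAt v (F t (u t) (v t) - ξ ^ 2 * u t) t := by
  have : Fact (0 < ω) := ⟨hω⟩
  let X := AddCircle ω
  let V := C(X, ℝ) × C(X, ℝ)
  have hGs : 0 ≤ Gs := by
    have := hker 0 ⟨le_rfl, hω.le⟩
    linarith
  have hcoe : Continuous fun t : ℝ => (t : X) := AddCircle.continuous_mk' ω
  have hjoint : ∀ κ : ℝ → ℝ, Continuous κ → Continuous fun q : V × X =>
      ∫ τ in (0:ℝ)..ω, κ τ * F (q.2 + (τ : X)) (q.1.1 (q.2 + (τ : X))) (q.1.2 (q.2 + (τ : X))) := by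
    intro κ hκ
    refine intervalIntegral.continuous_parametric_intervalIntegral_of_continuous' ?_ _ _
    refine (hκ.comp continuous_snd).mul ?_
    have hx : Continuous fun z : (V × X) × ℝ => z.1.2 + (z.2 : X) :=
      (continuous_snd.comp continuous_fst).add (hcoe.comp continuous_snd)
    exact hF.comp (hx.prodMk
      (((continuous_fst.comp (continuous_fst.comp continuous_fst)).eval hx).prodMk
      ((continuous_snd.comp (continuous_fst.comp continuous_fst)).eval hx)))
  let op : ∀ κ : ℝ → ℝ, Continuous κ → V → C(X, ℝ) := fun κ hκ p =>
    ⟨fun x => ∫ τ in (0:ℝ)..ω, κ τ * F (x + (τ : X)) (p.1 (x + (τ : X))) (p.2 (x + (τ : X))),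
      (hjoint κ hκ).comp (Continuous.prodMk_right p)⟩
  have hop : ∀ κ hκ, Continuous (op κ hκ) := fun κ hκ =>
    ContinuousMap.continuous_of_continuous_uncurry _ (hjoint κ hκ)
  let T : V → V := fun p =>
    (op _ (continuous_greenKer ω ξ) p, op _ (continuous_greenKer' ω ξ) p)
  have hT : Continuous T :=
    (hop _ (continuous_greenKer ω ξ)).prodMk (hop _ (continuous_greenKer' ω ξ))
  -- `|u'| ≤ δ R` and `|u''| = |F - ξ² u| ≤ |H| + ξ² R`, so `L` is a Lipschitz constant for both
  let L : ℝ := δ * R + (|H| + ξ ^ 2 * R)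
  have hR : 0 ≤ R := hm.le.trans hmR
  have hL : 0 ≤ L := by positivity
  let lip : ℝ → ℝ → Set C(X, ℝ) := fun a b =>
    {f : C(X, ℝ) | (∀ x, f x ∈ Icc a b) ∧ ∀ x y, |f x - f y| ≤ L * dist x y}
  let K : Set V := (lip m R ×ˢ lip (-(δ * R)) (δ * R)) ∩ {p | ∀ x, |p.2 x| ≤ δ * p.1 x}
  have hKmem : ∀ p : V, p ∈ K ↔ (p.1 ∈ lip m R ∧ p.2 ∈ lip (-(δ * R)) (δ * R)) ∧
      ∀ x, |p.2 x| ≤ δ * p.1 x := fun p => Iff.rfl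
  have hKcompact : IsCompact K := by
    refine ((isCompact_lipschitz m R L).prod (isCompact_lipschitz _ _ L)).inter_right ?_
    have : {p : V | ∀ x, |p.2 x| ≤ δ * p.1 x} = ⋂ x, {p : V | |p.2 x| ≤ δ * p.1 x} := by
      ext; simp
    rw [this]
    exact isClosed_iInter fun x => isClosed_le (by fun_prop) (by fun_prop)
  have hlipc : ∀ a b, Convex ℝ (lip a b) := by
    intro a b f hf g hg s t hs ht hst
    refine ⟨fun x => convex_Icc a b (hf.1 x) (hg.1 x) hs ht hst, fun x y => ?_⟩
    have e : (s • f + t • g) x - (s • f + t • g) y = s * (f x - f y) + t * (g x - g y) := by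
      simp; ring
    rw [e]
    calc |s * (f x - f y) + t * (g x - g y)| ≤ s * |f x - f y| + t * |g x - g y| := by
          refine (abs_add_le _ _).trans_eq ?_
          rw [abs_mul, abs_mul, abs_of_nonneg hs, abs_of_nonneg ht]
      _ ≤ s * (L * dist x y) + t * (L * dist x y) := by
          gcongr
          exacts [hf.2 x y, hg.2 x y]
      _ = L * dist x y := by rw [← add_mul, hst, one_mul]
  have hKconvex : Convex ℝ K := by
    refine ((hlipc _ _).prod (hlipc _ _)).inter ?_
    intro p hp q hq s t hs ht hst x
    change |s * p.2 x + t * q.2 x| ≤ δ * (s * p.1 x + t * q.1 x)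
    calc |s * p.2 x + t * q.2 x| ≤ s * |p.2 x| + t * |q.2 x| := by
          refine (abs_add_le _ _).trans_eq ?_
          rw [abs_mul, abs_mul, abs_of_nonneg hs, abs_of_nonneg ht]
      _ ≤ s * (δ * p.1 x) + t * (δ * q.1 x) := by
          gcongr
          exacts [hp x, hq x]
      _ = _ := by ring
  have hKne : K.Nonempty := by
    refine ⟨(ContinuousMap.const X m, 0), ⟨⟨fun x => ⟨le_rfl, hmR⟩, fun x y => ?_⟩,
      ⟨fun x => ⟨?_, ?_⟩, fun x y => ?_⟩⟩, fun x => ?_⟩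
    · simp only [ContinuousMap.const_apply, sub_self, abs_zero]; positivity
    · simp only [ContinuousMap.zero_apply, Left.neg_nonpos_iff]; positivity
    · simp only [ContinuousMap.zero_apply]; positivity
    · simp only [ContinuousMap.zero_apply, sub_self, abs_zero]; positivity
    · simp only [ContinuousMap.zero_apply, ContinuousMap.const_apply, abs_zero]; positivity
  -- the right-hand side along `p`, as a periodic function on the line
  let h : V → ℝ → ℝ := fun p t => F t (p.1 t) (p.2 t)
  have hhc : ∀ p, Continuous (h p) := fun p =>
    hF.comp (hcoe.prodMk ((p.1.continuous.comp hcoe).prodMk (p.2.continuous.comp hcoe)))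
  have hhper : ∀ p, Function.Periodic (h p) ω := fun p t => by
    simp only [h, AddCircle.coe_add_period]
  have hT1 : ∀ p (t : ℝ), (T p).1 t = ∫ τ in (0:ℝ)..ω, greenKer ω ξ τ * h p (t + τ) :=
    fun p t => by simp only [h, AddCircle.coe_add]; rfl
  have hT2 : ∀ p (t : ℝ), (T p).2 t = ∫ τ in (0:ℝ)..ω, greenKer' ω ξ τ * h p (t + τ) :=
    fun p t => by simp only [h, AddCircle.coe_add]; rfl
  have hder : ∀ p (t : ℝ), HasDerivAt (fun s : ℝ => (T p).1 s) ((T p).2 t) t ∧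
      HasDerivAt (fun s : ℝ => (T p).2 s) (h p t - ξ ^ 2 * (T p).1 t) t := by
    intro p t
    simp only [hT1, hT2]
    exact hasDerivAt_green hξ hsin (hhc p) (hhper p) t
  have hmaps : MapsTo T K K := by
    intro p hp
    rw [hKmem] at hp
    obtain ⟨⟨hp1, hp2⟩, hp3⟩ := hp
    have hh : ∀ t, 0 ≤ h p t ∧ h p t ≤ H := fun t =>
      hF0 _ _ _ (hp1.1 _).1 (hp1.1 _).2 (hp3 _)
    have hφh : ∀ t, φ t ≤ h p t := fun t =>
      hφF _ _ _ (hp1.1 _).1 (hp1.1 _).2 (hp3 _)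
    have hI : ∀ t, ∫ τ in (0:ℝ)..ω, h p (t + τ) = ∫ τ in (0:ℝ)..ω, h p τ := by
      intro t
      have e := intervalIntegral.integral_comp_add_left (a := 0) (b := ω) (h p) t
      rw [add_zero] at e
      rw [e, (hhper p).intervalIntegral_add_eq t 0, zero_add]
    set I := ∫ τ in (0:ℝ)..ω, h p τ with hIdef
    have hI0 : ∫ τ in (0:ℝ)..ω, φ τ ≤ I :=
      intervalIntegral.integral_mono_on hω.le (hφ.intervalIntegrable _ _)
        ((hhc p).intervalIntegrable _ _) fun t _ => hφh t
    have hIH : I ≤ ω * H := by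
      have : I ≤ ∫ _ in (0:ℝ)..ω, H :=
        intervalIntegral.integral_mono_on hω.le ((hhc p).intervalIntegrable 0 ω)
          intervalIntegrable_const fun t _ => (hh t).2
      simpa using this
    have hint : ∀ t : ℝ, Continuous fun τ => h p (t + τ) := fun t =>
      (hhc p).comp (continuous_const.add continuous_id)
    have hlow : ∀ t : ℝ, Gi * I ≤ (T p).1 t := by
      intro t
      rw [hT1, ← hI t, ← intervalIntegral.integral_const_mul]
      refine intervalIntegral.integral_mono_on hω.le (((hint t).const_mul _).intervalIntegrable _ _)
        (((continuous_greenKer ω ξ).mul (hint t)).intervalIntegrable _ _) fun τ hτ => ?_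
      exact mul_le_mul_of_nonneg_right (hker τ hτ).1 (hh _).1
    have hupp : ∀ t : ℝ, (T p).1 t ≤ Gs * I := by
      intro t
      rw [hT1, ← hI t, ← intervalIntegral.integral_const_mul]
      refine intervalIntegral.integral_mono_on hω.le
        (((continuous_greenKer ω ξ).mul (hint t)).intervalIntegrable _ _)
        (((hint t).const_mul _).intervalIntegrable _ _) fun τ hτ => ?_
      exact mul_le_mul_of_nonneg_right (hker τ hτ).2 (hh _).1
    have hv : ∀ t : ℝ, |(T p).2 t| ≤ M * I := by
      intro t
      rw [hT2, ← hI t, ← intervalIntegral.integral_const_mul]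
      refine (intervalIntegral.abs_integral_le_integral_abs hω.le).trans ?_
      refine intervalIntegral.integral_mono_on_of_le_Ioo hω.le
        ((((continuous_greenKer' ω ξ).mul (hint t)).abs).intervalIntegrable _ _)
        (((hint t).const_mul _).intervalIntegrable _ _) fun τ hτ => ?_
      rw [abs_mul, abs_of_nonneg (hh (t + τ)).1]
      exact mul_le_mul_of_nonneg_right (hker' τ hτ) (hh _).1
    have hIpos : 0 ≤ I := intervalIntegral.integral_nonneg hω.le fun t _ => (hh t).1
    have hu1 : ∀ t : ℝ, m ≤ (T p).1 t := fun t =>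
      (hφm.trans (mul_le_mul_of_nonneg_left hI0 hGi)).trans (hlow t)
    have hu2 : ∀ t : ℝ, (T p).1 t ≤ R := fun t =>
      ((hupp t).trans (mul_le_mul_of_nonneg_left hIH hGs)).trans hH
    have huv : ∀ t : ℝ, |(T p).2 t| ≤ δ * (T p).1 t := by
      intro t
      calc |(T p).2 t| ≤ M * I := hv t
        _ ≤ δ * Gi * I := by gcongr
        _ = δ * (Gi * I) := by ring
        _ ≤ _ := by gcongr; exact hlow t
    have hvR : ∀ t : ℝ, |(T p).2 t| ≤ δ * R := fun t =>
      (huv t).trans (by gcongr; exact hu2 t)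
    rw [hKmem]
    refine ⟨⟨⟨fun x => ?_, ?_⟩, ⟨fun x => ?_, ?_⟩⟩, fun x => ?_⟩
    · obtain ⟨t, rfl⟩ := QuotientAddGroup.mk_surjective x
      exact ⟨hu1 t, hu2 t⟩
    · refine AddCircle.lipschitz_of_lift _ ?_
      refine abs_sub_le_of_hasDerivAt (fun t => (hder p t).1) fun t => (hvR t).trans ?_
      simp only [L]
      have : 0 ≤ |H| + ξ ^ 2 * R := by positivity
      linarith
    · obtain ⟨t, rfl⟩ := QuotientAddGroup.mk_surjective x
      exact abs_le.1 (hvR t)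
    · refine AddCircle.lipschitz_of_lift _ ?_
      refine abs_sub_le_of_hasDerivAt (fun t => (hder p t).2) fun t => ?_
      have h1 : |h p t| ≤ |H| := abs_le_abs_of_nonneg (hh t).1 (hh t).2
      have h2 : |ξ ^ 2 * (T p).1 t| ≤ ξ ^ 2 * R := by
        rw [abs_mul, abs_of_nonneg (sq_nonneg ξ), abs_of_nonneg (hm.le.trans (hu1 t))]
        gcongr
        exact hu2 t
      have h3 : 0 ≤ δ * R := by positivity
      refine (abs_sub _ _).trans ?_
      simp only [L]
      linarith
    · obtain ⟨t, rfl⟩ := QuotientAddGroup.mk_surjective x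
      exact huv t
  obtain ⟨p, hp, hfix⟩ := schauder hKcompact hKconvex hKne T hT.continuousOn hmaps
  rw [hKmem] at hp
  refine ⟨fun t => p.1 t, fun t => p.2 t, fun t => ?_, fun t => ?_, fun t => ⟨(hp.1.1.1 _).1, hp.2 _⟩,
    fun t => ?_⟩
  · simp only [AddCircle.coe_add_period]
  · simp only [AddCircle.coe_add_period]
  · have := hder p t
    rw [hfix] at this
    exact this

/-! ### The singular equation -/

/-- A sublinear perturbation of `κ R` with `κ < 1` lies below `R` for some large `R`. -/
theorem exists_sublinear_bound {κ β : ℝ} (hκ : κ < 1) (hβ : β < 1) (A C m : ℝ) :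
    ∃ R, m ≤ R ∧ κ * R + A + C * R ^ β ≤ R := by
  have h1 : (fun R : ℝ => A + C * R ^ β) =o[Filter.atTop] fun R : ℝ => R := by
    refine (Asymptotics.isLittleO_const_id_atTop A).add (Asymptotics.IsLittleO.const_mul_left ?_ C)
    refine (Asymptotics.isLittleO_iff_tendsto' ?_).2 ?_
    · filter_upwards [Filter.eventually_gt_atTop 0] with R hR h
      exact absurd h hR.ne'
    · refine (tendsto_rpow_neg_atTop (sub_pos.2 hβ)).congr' ?_
      filter_upwards [Filter.eventually_gt_atTop 0] with R hR
      rw [neg_sub, rpow_sub_one hR.ne', id]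
  have h2 := h1.def (sub_pos.2 hκ)
  obtain ⟨R, hR, hmR, h0⟩ :=
    (h2.and ((Filter.eventually_ge_atTop m).and (Filter.eventually_ge_atTop 0))).exists
  refine ⟨R, hmR, ?_⟩
  rw [norm_eq_abs, norm_eq_abs, abs_of_nonneg h0] at hR
  have := le_abs_self (A + C * R ^ β)
  linarith

/-- The substitution `x = u ^ α`. Since `x'' = α u^(α-1) u'' - α (1-α) u^(α-2) u'²`, the term
`(1-α) u'² / u` in the equation for `u` cancels, and `x` satisfies the singular equation. -/
theorem rpow_substitution {α ρ ξ : ℝ} (hρ : 0 < ρ) (hα : α = 1 / (ρ + 1)) {u v β e : ℝ → ℝ}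
    (hu : ∀ t, 0 < u t) (he : Continuous e) (hβ : Continuous β)
    (hd : ∀ t, HasDerivAt u (v t) t ∧ HasDerivAt v
      ((1 - α) * v t ^ 2 / u t + β t / α + e t * u t ^ (1 - α) / α - ξ ^ 2 * u t) t) :
    ContDiff ℝ 2 (fun t => u t ^ α) ∧ ∀ t, deriv (deriv fun t => u t ^ α) t +
      (α * ξ ^ 2) * u t ^ α = β t / (u t ^ α) ^ ρ + e t := by
  have hα0 : 0 < α := by rw [hα]; positivity
  have hαρ : α * ρ = 1 - α := by rw [hα]; field_simp; ring
  have hdx : ∀ t, HasDerivAt (fun t => u t ^ α) (v t * α * u t ^ (α - 1)) t := fun t =>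
    (hd t).1.rpow_const (Or.inl (hu t).ne')
  have hd1 : (deriv fun t => u t ^ α) = fun t => v t * α * u t ^ (α - 1) :=
    funext fun t => (hdx t).deriv
  have huc : Continuous u := continuous_iff_continuousAt.2 fun t => (hd t).1.continuousAt
  have hvc : Continuous v := continuous_iff_continuousAt.2 fun t => (hd t).2.continuousAt
  have hv1 : ContDiff ℝ 1 v := by
    rw [contDiff_one_iff_deriv]
    refine ⟨fun t => (hd t).2.differentiableAt, ?_⟩
    have : deriv v = _ := funext fun t => (hd t).2.deriv
    rw [this]
    have h1 : Continuous fun t => u t ^ (1 - α) := huc.rpow_const fun t => Or.inl (hu t).ne'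
    have h2 : Continuous fun t => (1 - α) * v t ^ 2 / u t :=
      (continuous_const.mul (hvc.pow 2)).div huc fun t => (hu t).ne'
    fun_prop
  have hu2 : ContDiff ℝ 2 u := by
    rw [show (2 : WithTop ℕ∞) = 1 + 1 by norm_num, contDiff_succ_iff_deriv]
    refine ⟨fun t => (hd t).1.differentiableAt, by simp, ?_⟩
    have : deriv u = v := funext fun t => (hd t).1.deriv
    rwa [this]
  refine ⟨hu2.rpow_const_of_ne fun t => (hu t).ne', fun t => ?_⟩
  have hd2 := ((hd t).2.mul_const α).mul
    ((hd t).1.rpow_const (p := α - 1) (Or.inl (hu t).ne'))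
  rw [hd1, show (fun t => v t * α * u t ^ (α - 1)) = (fun t => v t * α) * fun t => u t ^ (α - 1)
    from rfl, hd2.deriv, ← rpow_mul (hu t).le, hαρ]
  -- all powers of `u` are written through `p = u ^ α`
  have h0 := hu t
  set p := u t ^ α with hp
  have hp0 : 0 < p := rpow_pos_of_pos h0 _
  have e1 : u t ^ (α - 1) = p / u t := rpow_sub_one h0.ne' _
  have e2 : u t ^ (α - 1 - 1) = p / u t / u t := by rw [rpow_sub_one h0.ne', e1]
  have e3 : u t ^ (1 - α) = u t / p := by rw [rpow_sub h0, rpow_one]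
  rw [e1, e2, e3]
  field_simp
  ring

/-- The equation with the combined coefficient `β = b + c`, given a positive level `m` above which
the right-hand side `β / α + e u^(1-α) / α` is nonnegative and dominates a function `φ` with
`m ≤ G_* ∫ φ`. The smallness hypothesis on `δ` makes the remaining term `(1-α) u'² / u ≤ (1-α) δ² u`
contribute less than `u` after applying the Green operator, so an upper level `R` exists. -/
theorem exists_solution_of_lower_bound {ω α ρ ξ Gi Gs M σ δ m : ℝ} (hω : 0 < ω) (hρ : 0 < ρ)
    (hα : α = 1 / (ρ + 1)) (hξ : ξ ≠ 0) (hsin : sin (ξ * ω / 2) ≠ 0)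
    (hGi : 0 < Gi) (hM0 : 0 ≤ M) (hσ : σ = Gi / (Gs + M)) (hδ : δ = M / Gi)
    (hker : ∀ τ ∈ Icc 0 ω, Gi ≤ greenKer ω ξ τ ∧ greenKer ω ξ τ ≤ Gs)
    (hker' : ∀ τ ∈ Ioo 0 ω, |greenKer' ω ξ τ| ≤ M)
    (hH2 : (1 - α) * (Gs + δ * Gi) * δ ^ 2 * ω / σ < 1)
    {β e φ : ℝ → ℝ} (hβ : Continuous β) (hβper : Function.Periodic β ω)
    (he : Continuous e) (heper : Function.Periodic e ω) (hepos : ∀ t, 0 < e t)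
    (hm : 0 < m) (hφ : Continuous φ)
    (hpos : ∀ t u, m ≤ u → 0 ≤ β t / α + e t * u ^ (1 - α) / α)
    (hφle : ∀ t u, m ≤ u → φ t ≤ β t / α + e t * u ^ (1 - α) / α)
    (hφm : m ≤ Gi * ∫ t in (0:ℝ)..ω, φ t) :
    ∃ x : ℝ → ℝ, ContDiff ℝ 2 x ∧ Function.Periodic x ω ∧ (∀ t, 0 < x t) ∧
      ∀ t, deriv (deriv x) t + (α * ξ ^ 2) * x t = β t / x t ^ ρ + e t := by
  have hα0 : 0 < α := by rw [hα]; positivity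
  have hα1 : 0 < 1 - α := by
    rw [hα, sub_pos, div_lt_one (by linarith)]; linarith
  have hGs : Gi ≤ Gs := by
    have := hker 0 ⟨le_rfl, hω.le⟩
    linarith
  have hGs0 : 0 < Gs := hGi.trans_le hGs
  have hδ0 : 0 ≤ δ := by rw [hδ]; positivity
  have hδG : δ * Gi = M := by rw [hδ]; field_simp
  have hσ0 : 0 < σ := by rw [hσ]; positivity
  have hσ1 : σ ≤ 1 := by rw [hσ, div_le_one (by linarith)]; linarith
  have hκ : Gs * ω * ((1 - α) * δ ^ 2) < 1 := by
    rw [div_lt_one hσ0, hδG] at hH2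
    have : 0 ≤ (1 - α) * M * δ ^ 2 * ω := by positivity
    nlinarith
  have : Fact (0 < ω) := ⟨hω⟩
  -- the coefficients as functions on the circle
  have hlift : ∀ f : ℝ → ℝ, Continuous f → Function.Periodic f ω →
      ∃ g : AddCircle ω → ℝ, Continuous g ∧ ∀ t : ℝ, g t = f t := fun f hf hp =>
    ⟨hp.lift, continuous_coinduced_dom.2 hf, fun t => rfl⟩
  obtain ⟨β', hβ'c, hβ'⟩ := hlift β hβ hβper
  obtain ⟨e', he'c, he'⟩ := hlift e he heper
  obtain ⟨B, hB⟩ := (isCompact_range hβ'c).bddAbove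
  obtain ⟨E, hE⟩ := (isCompact_range he'c).bddAbove
  obtain ⟨R, hmR, hR⟩ := exists_sublinear_bound hκ (β := 1 - α) (by linarith)
    (Gs * ω * (B / α)) (Gs * ω * (E / α)) m
  -- cutting off at `u = m` makes the nonlinearity continuous everywhere
  let F : AddCircle ω → ℝ → ℝ → ℝ := fun x u v =>
    (1 - α) * v ^ 2 / max u m + β' x / α + e' x * (max u m) ^ (1 - α) / α
  have hFc : Continuous fun p : AddCircle ω × ℝ × ℝ => F p.1 p.2.1 p.2.2 := by
    have hmax : Continuous fun p : AddCircle ω × ℝ × ℝ => max p.2.1 m := by fun_prop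
    have hne : ∀ p : AddCircle ω × ℝ × ℝ, max p.2.1 m ≠ 0 := fun p =>
      (hm.trans_le (le_max_right _ _)).ne'
    have h1 : Continuous fun p : AddCircle ω × ℝ × ℝ => (1 - α) * p.2.2 ^ 2 / max p.2.1 m :=
      (by fun_prop : Continuous fun p : AddCircle ω × ℝ × ℝ => (1 - α) * p.2.2 ^ 2).div hmax hne
    have h2 : Continuous fun p : AddCircle ω × ℝ × ℝ => (max p.2.1 m) ^ (1 - α) :=
      hmax.rpow_const fun p => Or.inl (hne p)
    exact (h1.add ((hβ'c.comp continuous_fst).div_const α)).add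
      (((he'c.comp continuous_fst).mul h2).div_const α)
  have hFeq : ∀ (t u v : ℝ), m ≤ u → F t u v =
      (1 - α) * v ^ 2 / u + β t / α + e t * u ^ (1 - α) / α := fun t u v hu => by
    simp only [F, max_eq_left hu, hβ', he']
  have hF0 : ∀ x u v, m ≤ u → u ≤ R → |v| ≤ δ * u → 0 ≤ F x u v ∧
      F x u v ≤ (1 - α) * δ ^ 2 * R + B / α + E / α * R ^ (1 - α) := by
    intro x u v hu huR hv
    obtain ⟨t, rfl⟩ := QuotientAddGroup.mk_surjective x
    have hu0 : 0 < u := hm.trans_le hu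
    have hF := hFeq t u v hu
    have h0 : 0 ≤ (1 - α) * v ^ 2 / u := by positivity
    refine ⟨hF.ge.trans' (by linarith [hpos t u hu]), hF.le.trans ?_⟩
    have hB' : β t ≤ B := hβ' t ▸ hB ⟨_, rfl⟩
    have hE' : e t ≤ E := he' t ▸ hE ⟨_, rfl⟩
    have hE0 : 0 < E := (hepos t).trans_le hE'
    have h1 : (1 - α) * v ^ 2 / u ≤ (1 - α) * δ ^ 2 * R := by
      rw [div_le_iff₀ hu0]
      have : v ^ 2 ≤ (δ * u) ^ 2 := sq_le_sq' (abs_le.1 hv).1 (abs_le.1 hv).2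
      calc (1 - α) * v ^ 2 ≤ (1 - α) * (δ * u) ^ 2 := by gcongr
        _ = (1 - α) * δ ^ 2 * u * u := by ring
        _ ≤ _ := by gcongr
    have h2 : e t * u ^ (1 - α) / α ≤ E / α * R ^ (1 - α) := by
      rw [mul_div_right_comm]
      gcongr
    have h3 : β t / α ≤ B / α := by gcongr
    linarith
  have hφF : ∀ (t : ℝ) (u v : ℝ), m ≤ u → u ≤ R → |v| ≤ δ * u → φ t ≤ F t u v := by
    intro t u v hu huR hv
    have hu0 : 0 < u := hm.trans_le hu
    have h0 : 0 ≤ (1 - α) * v ^ 2 / u := by positivity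
    rw [hFeq t u v hu]
    linarith [hφle t u hu]
  obtain ⟨u, v, hup, -, huv, hd⟩ := exists_periodic_solution_s12 hω hξ hsin hFc hm hmR hδ0 hGi.le
    hker hker' hδG.ge hF0 (by linarith) hφ hφF hφm
  have hu : ∀ t, 0 < u t := fun t => hm.trans_le (huv t).1
  obtain ⟨h1, h2⟩ := rpow_substitution (ξ := ξ) hρ hα hu he hβ fun t => by
    rw [← hFeq t _ _ (huv t).1]
    exact hd t
  exact ⟨_, h1, fun t => by simp only [hup t], fun t => rpow_pos_of_pos (hu t) _, h2⟩

theorem corollary_rho1_eq_rho2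
    (ω ρ α ξ : ℝ) (hω : 0 < ω) (hρ : 0 < ρ)
    (hα : α = 1 / (ρ + 1))
    (hξ : 0 < ξ) (hξπ : ξ < Real.pi / ω)
    (b c e : ℝ → ℝ)
    (hb : Continuous b) (hbper : Function.Periodic b ω)
    (hc : Continuous c) (hcper : Function.Periodic c ω) (hcpos : ∀ t, 0 < c t)
    (he : Continuous e) (heper : Function.Periodic e ω) (hepos : ∀ t, 0 < e t)
    (G : ℝ → ℝ → ℝ)
    (hGdef : ∀ t ∈ Set.Icc 0 ω, ∀ s ∈ Set.Icc 0 ω,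
      G t s = if s ≤ t then Real.cos (ξ * (t - s - ω / 2)) / (2 * ξ * Real.sin (ξ * ω / 2))
              else Real.cos (ξ * (t - s + ω / 2)) / (2 * ξ * Real.sin (ξ * ω / 2)))
    (Gsup Ginf M σ δ bst cst est bbar : ℝ)
    (hGsup : IsGreatest {x | ∃ t ∈ Set.Icc 0 ω, ∃ s ∈ Set.Icc 0 ω, G t s = x} Gsup)
    (hGinf : IsLeast {x | ∃ t ∈ Set.Icc 0 ω, ∃ s ∈ Set.Icc 0 ω, G t s = x} Ginf)
    (hM : IsGreatest {x | ∃ t ∈ Set.Icc 0 ω, ∃ s ∈ Set.Icc 0 ω,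
      |deriv (fun τ => G τ s) t| = x} M)
    (hσ : σ = Ginf / (Gsup + M)) (hδ : δ = M / Ginf)
    (hbst : IsLeast (b '' Set.Icc 0 ω) bst)
    (hcst : IsLeast (c '' Set.Icc 0 ω) cst)
    (hest : IsLeast (e '' Set.Icc 0 ω) est)
    (hbbar : bbar = (1 / ω) * ∫ t in (0:ℝ)..ω, max 0 (b t))
    (hH2 : (1 - α) * (Gsup + δ * Ginf) * δ ^ 2 * ω / σ < 1)
    (hcase : 0 ≤ bst + cst ∨
      (bst + cst < 0 ∧ ∃ r, 0 < r ∧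
        0 < est * (σ * r) ^ (1 - α) + (bst + cst) ∧
        r ≤ Ginf * bbar * ω / α)) :
    ∃ x : ℝ → ℝ,
      ContDiff ℝ 2 x ∧ Function.Periodic x ω ∧ (∀ t, 0 < x t) ∧
      ∀ t, deriv (deriv x) t + (α * ξ ^ 2) * x t =
        b t / x t ^ ρ + c t / x t ^ ρ + e t := by
  have hα0 : 0 < α := by rw [hα]; positivity
  have hα1 : 0 < 1 - α := by
    rw [hα, sub_pos, div_lt_one (by linarith)]; linarith
  have hξω : ξ * ω < π := (lt_div_iff₀ hω).1 hξπ
  have hξω0 : 0 < ξ * ω := mul_pos hξ hω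
  have hsin : 0 < sin (ξ * ω / 2) := sin_pos_of_pos_of_lt_pi (by linarith) (by linarith)
  have hGker : ∀ τ ∈ Icc 0 ω, G τ 0 = greenKer ω ξ τ := fun τ hτ => by
    rw [hGdef τ hτ 0 ⟨le_rfl, hω.le⟩, if_pos hτ.1, greenKer, ← cos_neg]
    ring_nf
  have hcos : ∀ y, |y| ≤ ω / 2 → 0 < cos (ξ * y) / (2 * ξ * sin (ξ * ω / 2)) := fun y hy => by
    refine div_pos (cos_pos_of_mem_Ioo ⟨?_, ?_⟩) (by positivity)
    · nlinarith [(abs_le.1 hy).1]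
    · nlinarith [(abs_le.1 hy).2]
  have hGi : 0 < Ginf := by
    obtain ⟨t, ht, s, hs, h⟩ := hGinf.1
    rw [← h, hGdef t ht s hs]
    split_ifs with hst
    · exact hcos _ (abs_le.2 ⟨by linarith, by linarith [ht.2, hs.1]⟩)
    · exact hcos _ (abs_le.2 ⟨by linarith [ht.1, hs.2], by linarith⟩)
  have hker : ∀ τ ∈ Icc 0 ω, Ginf ≤ greenKer ω ξ τ ∧ greenKer ω ξ τ ≤ Gsup := fun τ hτ =>
    ⟨hGinf.2 ⟨τ, hτ, 0, ⟨le_rfl, hω.le⟩, hGker τ hτ⟩,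
      hGsup.2 ⟨τ, hτ, 0, ⟨le_rfl, hω.le⟩, hGker τ hτ⟩⟩
  have hM0 : 0 ≤ M := by
    obtain ⟨t, -, s, -, h⟩ := hM.1
    exact h ▸ abs_nonneg _
  have hker' : ∀ τ ∈ Ioo 0 ω, |greenKer' ω ξ τ| ≤ M := fun τ hτ => by
    refine hM.2 ⟨τ, Ioo_subset_Icc_self hτ, 0, ⟨le_rfl, hω.le⟩, ?_⟩
    have h1 : (fun τ => G τ 0) =ᶠ[nhds τ] greenKer ω ξ := by
      filter_upwards [isOpen_Ioo.mem_nhds hτ] with s hs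
      exact hGker s (Ioo_subset_Icc_self hs)
    have h2 : HasDerivAt (greenKer ω ξ) (-greenKer' ω ξ τ) τ := by
      have h3 := ((((hasDerivAt_id τ).const_sub (ω / 2)).const_mul ξ).cos).div_const
        (2 * ξ * sin (ξ * ω / 2))
      refine h3.congr_deriv ?_
      rw [greenKer', show ξ * (ω / 2 - id τ) = -(ξ * (τ - ω / 2)) by simp only [id]; ring, sin_neg]
      field_simp
    rw [h1.deriv_eq, h2.deriv, abs_neg]
  have hσ1 : σ ≤ 1 := by
    have := hker 0 ⟨le_rfl, hω.le⟩
    rw [hσ, div_le_one (by linarith)]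
    linarith
  have hσ0 : 0 < σ := by
    have := hker 0 ⟨le_rfl, hω.le⟩
    rw [hσ]
    exact div_pos hGi (by linarith)
  -- by periodicity the minima over one period are global lower bounds
  have hmin : ∀ {f : ℝ → ℝ} {k : ℝ}, Function.Periodic f ω → IsLeast (f '' Icc 0 ω) k →
      ∀ t, k ≤ f t := fun {f k} hf hk t => by
    obtain ⟨y, hy, hfy⟩ := hf.exists_mem_Ico₀ hω t
    rw [hfy]
    exact hk.2 ⟨y, Ico_subset_Icc_self hy, rfl⟩
  have hb' := hmin hbper hbst
  have hc' := hmin hcper hcst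
  have he' := hmin heper hest
  have hest0 : 0 < est := by
    obtain ⟨t, -, h⟩ := hest.1
    exact h ▸ hepos t
  -- the two cases differ only in the lower level `m` and the minorant `φ`
  suffices ∃ m φ, 0 < m ∧ Continuous φ ∧
      (∀ t u, m ≤ u → 0 ≤ (b t + c t) / α + e t * u ^ (1 - α) / α) ∧
      (∀ t u, m ≤ u → φ t ≤ (b t + c t) / α + e t * u ^ (1 - α) / α) ∧
      m ≤ Ginf * ∫ t in (0:ℝ)..ω, φ t by
    obtain ⟨m, φ, hm, hφ, h0, h1, h2⟩ := this
    obtain ⟨x, hx1, hx2, hx3, hx4⟩ := exists_solution_of_lower_bound hω hρ hα hξ.ne' hsin.ne' hGi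
      hM0 hσ hδ hker hker' hH2 (hb.add hc) (hbper.add hcper) he heper hepos hm hφ h0 h1 h2
    exact ⟨x, hx1, hx2, hx3, fun t => by rw [hx4 t, Pi.add_apply, add_div]⟩
  rcases hcase with hcase | ⟨-, r, hr, hr1, hr2⟩
  · -- here `m = k ^ (1 / α)` solves `m ^ α = k`, which is equality in the last condition
    set k := Ginf * ω * est / α with hk
    have hk0 : 0 < k := by positivity
    have hβ : ∀ t, 0 ≤ (b t + c t) / α := fun t =>
      div_nonneg (by linarith [hb' t, hc' t]) hα0.le
    have hm : 0 < k ^ (1 / α) := rpow_pos_of_pos hk0 _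
    refine ⟨k ^ (1 / α), fun _ => est * (k ^ (1 / α)) ^ (1 - α) / α, hm, continuous_const,
      fun t u hu => ?_, fun t u hu => ?_, ?_⟩
    · have := hepos t
      have := hm.trans_le hu
      have := hβ t
      positivity
    · have : est * (k ^ (1 / α)) ^ (1 - α) / α ≤ e t * u ^ (1 - α) / α := by
        gcongr
        exacts [(hepos t).le, he' t]
      linarith [hβ t]
    · rw [intervalIntegral.integral_const, sub_zero, smul_eq_mul, rpow_sub hm, rpow_one,
        ← rpow_mul hk0.le, one_div_mul_cancel hα0.ne', rpow_one]
      refine le_of_eq ?_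
      rw [eq_comm, ← mul_div_assoc]
      generalize k ^ (1 / α) = m
      rw [hk]
      field_simp
  · have h0 : ∀ t u, r ≤ u → 0 ≤ (b t + c t) / α + e t * u ^ (1 - α) / α := fun t u hu => by
      have h1 : est * (σ * r) ^ (1 - α) ≤ e t * u ^ (1 - α) := by
        have : σ * r ≤ u := (mul_le_of_le_one_left hr.le hσ1).trans hu
        gcongr
        exacts [(hepos t).le, he' t]
      rw [← add_div]
      exact div_nonneg (by linarith [hb' t, hc' t]) hα0.le
    refine ⟨r, fun t => max 0 (b t) / α, hr, by fun_prop, h0, fun t u hu => ?_, ?_⟩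
    · change max 0 (b t) / α ≤ _
      rcases le_total (b t) 0 with hbt | hbt
      · rw [max_eq_left hbt, zero_div]
        exact h0 t u hu
      · have := hepos t
        have := hr.trans_le hu
        have : 0 ≤ e t * u ^ (1 - α) / α := by positivity
        have : 0 ≤ c t / α := (div_pos (hcpos t) hα0).le
        rw [max_eq_right hbt, add_div]
        linarith
    · rw [intervalIntegral.integral_div]
      refine hr2.trans_eq ?_
      rw [hbbar]
      field_simp
end
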